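/- arXiv:0705.2253 — 2 statements merged into one kernel-verified Lean document; each statement's English description precedes it below -/
import Mathlib

section
/- For every integer n ≥ 2 there is a constant c > 0 (depending only on n) such that for all x, y ∈ SO(n), W_{D,2}(K_x, K_y) ≤ √(1 − 1/C(n,2)) · D(x,y) + c · D(x,y)². In particular, the map x ↦ K_x from (SO(n), D) to the space of probability measures with the W_{D,2} metric is locally √(1 − 1/C(n,2))-Lipschitz. -/
open MeasureTheory ENNReal Filter Topology Matrix

noncomputable section

/-- The (Borel) product measurable structure on matrices. -/
instance matrixMeasurableSpace {m n R : Type*} [MeasurableSpace R] :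
    MeasurableSpace (Matrix m n R) :=
  (inferInstance : MeasurableSpace (m → n → R))

/-- `η` is a coupling of `μ` and `ν`: its two marginals are `μ` and `ν`. -/
def IsCoupling {X : Type*} [MeasurableSpace X] (η : Measure (X × X)) (μ ν : Measure X) : Prop :=
  η.map Prod.fst = μ ∧ η.map Prod.snd = ν

/-- The `L^p` transportation cost (Wasserstein) distance associated with the distance
function `d`, with values in `ℝ≥0∞`:
`W_{d,p}(μ,ν) = inf { (∫ d(x,y)^p dη)^{1/p} : η a coupling of (μ,ν) }`. -/
def wassersteinE {X : Type*} [MeasurableSpace X] (d : X → X → ℝ≥0∞) (p : ℝ)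
    (μ ν : Measure X) : ℝ≥0∞ :=
  ⨅ (η : Measure (X × X)) (_ : IsCoupling η μ ν), (∫⁻ z, d z.1 z.2 ^ p ∂η) ^ (1 / p)

/-- The length of the curve `γ` over `[0,1]`, w.r.t. the distance function `d`:
the supremum, over all partitions `0 = t 0 ≤ t 1 ≤ ⋯ ≤ t k = 1` of `[0,1]`, of the sums of
the distances between consecutive points of the curve. -/
def pathLengthE {X : Type*} (d : X → X → ℝ≥0∞) (γ : ℝ → X) : ℝ≥0∞ :=
  ⨆ (k : ℕ) (t : Fin (k + 1) → ℝ) (_ : Monotone t) (_ : t 0 = 0) (_ : t (Fin.last k) = 1),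
    ∑ i : Fin k, d (γ (t i.castSucc)) (γ (t i.succ))

/-- The intrinsic (length) distance on the set `S` induced by the distance function `d`:
the infimum of `d`-lengths of continuous paths joining `a` to `b` inside `S`. -/
def intrinsicDistE {X : Type*} [TopologicalSpace X] (d : X → X → ℝ≥0∞) (S : Set X)
    (a b : X) : ℝ≥0∞ :=
  ⨅ (γ : ℝ → X) (_ : ContinuousOn γ (Set.Icc 0 1)) (_ : Set.MapsTo γ (Set.Icc 0 1) S)
    (_ : γ 0 = a) (_ : γ 1 = b), pathLengthE d γ

/-- `t` iterated steps of the Markov transition kernel `P`, started from the initial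
distribution `μ` (so `kernelIterate P t μ = μP^t`). -/
def kernelIterate {X : Type*} [MeasurableSpace X] (P : X → Measure X) :
    ℕ → Measure X → Measure X
  | 0, μ => μ
  | t + 1, μ => (kernelIterate P t μ).bind P

/-- A Haar probability measure for the multiplicative set `S`, viewed as a measure on the
ambient space: a probability measure carried by `S` that is invariant under left and right
translations by all elements of `S`. -/
def IsHaarLike {X : Type*} [MeasurableSpace X] [Mul X] (S : Set X) (μ : Measure X) : Prop :=
  IsProbabilityMeasure μ ∧ μ Sᶜ = 0 ∧
    ∀ a ∈ S, μ.map (fun x => a * x) = μ ∧ μ.map (fun x => x * a) = μ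

/-- The Haar probability measure of a compact matrix group `S` (such as `SO(n)` or `U(n)`),
viewed as a measure on the ambient matrix space.  For such `S` a translation-invariant
probability measure exists and is unique, so `haarLike S` is *the* Haar probability
measure of `S`. -/
def haarLike {X : Type*} [MeasurableSpace X] [Mul X] (S : Set X) : Measure X := by
  classical exact if h : ∃ μ, IsHaarLike S μ then h.choose else 0

/-- The set of pairs `1 ≤ i < j ≤ n` of indices. -/
def pairs (n : ℕ) : Finset (Fin n × Fin n) :=
  Finset.univ.filter fun p => p.1 < p.2

/-- The special orthogonal group `SO(n)`, as a subset of the `n × n` real matrices. -/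
def SO (n : ℕ) : Set (Matrix (Fin n) (Fin n) ℝ) :=
  {a | a * aᵀ = 1 ∧ a.det = 1}

/-- The Hilbert–Schmidt (Frobenius) distance `‖a - b‖_hs = √(Tr((a-b)ᵀ(a-b)))` between real
matrices, as an `ℝ≥0∞`-valued distance function. -/
def hsDist {n : ℕ} (a b : Matrix (Fin n) (Fin n) ℝ) : ℝ≥0∞ :=
  ENNReal.ofReal (Real.sqrt (Matrix.trace ((a - b)ᵀ * (a - b))))

/-- The intrinsic (Riemannian/length) metric `D` on `SO(n)` induced by the Hilbert–Schmidt
norm: the infimum of `hs`-lengths of continuous paths inside `SO(n)`. -/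
def DSO (n : ℕ) (a b : Matrix (Fin n) (Fin n) ℝ) : ℝ≥0∞ :=
  intrinsicDistE hsDist (SO n) a b

/-- The rotation `R(i,j,θ)` by the angle `θ` of the plane spanned by the `i`-th and `j`-th
canonical basis vectors: `R e_i = cos θ e_i + sin θ e_j`, `R e_j = cos θ e_j - sin θ e_i`,
and `R e_k = e_k` for `k ∉ {i,j}`. -/
def kacRot {n : ℕ} (i j : Fin n) (θ : ℝ) : Matrix (Fin n) (Fin n) ℝ :=
  Matrix.of fun k l =>
    if k = i ∧ l = i then Real.cos θ
    else if k = j ∧ l = i then Real.sin θ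
    else if k = i ∧ l = j then -Real.sin θ
    else if k = j ∧ l = j then Real.cos θ
    else if k = l then 1 else 0

/-- The uniform probability measure on the angle interval `[0, 2π]`. -/
def uniformAngle : Measure ℝ :=
  (ENNReal.ofReal (2 * Real.pi))⁻¹ • MeasureTheory.volume.restrict (Set.Icc 0 (2 * Real.pi))

/-- The transition kernel of Kac's random walk on `SO(n)`:
`K_x = (1/(2π·C(n,2))) ∑_{1≤i<j≤n} ∫₀^{2π} δ_{R(i,j,θ)·x} dθ`. -/
def kacKernel (n : ℕ) (x : Matrix (Fin n) (Fin n) ℝ) : Measure (Matrix (Fin n) (Fin n) ℝ) :=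
  (n.choose 2 : ℝ≥0∞)⁻¹ •
    ∑ p ∈ pairs n, uniformAngle.map fun θ => kacRot p.1 p.2 θ * x

/-! ### The squared Hilbert–Schmidt norm -/

section HilbertSchmidt

variable {n : ℕ}

/-- The squared Hilbert–Schmidt norm `Tr(MᵀM)`. -/
def hsSq (M : Matrix (Fin n) (Fin n) ℝ) : ℝ := Matrix.trace (Mᵀ * M)

theorem hsDist_eq (a b : Matrix (Fin n) (Fin n) ℝ) :
    hsDist a b = ENNReal.ofReal (Real.sqrt (hsSq (a - b))) := rfl

theorem hsSq_eq_sum (M : Matrix (Fin n) (Fin n) ℝ) : hsSq M = ∑ i, ∑ j, M i j ^ 2 := by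
  rw [Finset.sum_comm]
  simp [hsSq, Matrix.trace, Matrix.mul_apply, sq]

theorem hsSq_nonneg (M : Matrix (Fin n) (Fin n) ℝ) : 0 ≤ hsSq M := by
  rw [hsSq_eq_sum]; positivity

theorem hsSq_smul (r : ℝ) (M : Matrix (Fin n) (Fin n) ℝ) : hsSq (r • M) = r ^ 2 * hsSq M := by
  simp [hsSq_eq_sum, Finset.mul_sum, mul_pow]

theorem hsSq_neg (M : Matrix (Fin n) (Fin n) ℝ) : hsSq (-M) = hsSq M := by
  simp [hsSq]

theorem hsSq_transpose (M : Matrix (Fin n) (Fin n) ℝ) : hsSq Mᵀ = hsSq M := by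
  simp [hsSq, Matrix.trace_mul_comm M]

theorem hsSq_mul_le (M P : Matrix (Fin n) (Fin n) ℝ) : hsSq (M * P) ≤ hsSq M * hsSq P := by
  have h : hsSq M * hsSq P = ∑ i, ∑ k, (∑ j, M i j ^ 2) * ∑ j, P j k ^ 2 := by
    rw [hsSq_eq_sum, hsSq_eq_sum, Finset.sum_comm (f := fun i j => P i j ^ 2), Finset.sum_mul_sum]
  rw [h, hsSq_eq_sum]
  refine Finset.sum_le_sum fun i _ => Finset.sum_le_sum fun k _ => ?_
  rw [Matrix.mul_apply]
  exact Finset.sum_mul_sq_le_sq_mul_sq _ _ _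

theorem hsSq_mul_left {a : Matrix (Fin n) (Fin n) ℝ} (ha : aᵀ * a = 1)
    (M : Matrix (Fin n) (Fin n) ℝ) : hsSq (a * M) = hsSq M := by
  rw [hsSq, Matrix.transpose_mul, Matrix.mul_assoc, ← Matrix.mul_assoc aᵀ, ha, Matrix.one_mul, hsSq]

theorem hsSq_mul_right {a : Matrix (Fin n) (Fin n) ℝ} (ha : a * aᵀ = 1)
    (M : Matrix (Fin n) (Fin n) ℝ) : hsSq (M * a) = hsSq M := by
  rw [← hsSq_transpose, Matrix.transpose_mul, hsSq_mul_left (by simpa using ha), hsSq_transpose]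

theorem trace_mul_eq_zero_of_symm_of_skew {A S : Matrix (Fin n) (Fin n) ℝ} (hA : Aᵀ = A)
    (hS : Sᵀ = -S) : Matrix.trace (A * S) = 0 := by
  have h := Matrix.trace_transpose (A * S)
  rw [Matrix.transpose_mul, hA, hS, Matrix.neg_mul, Matrix.trace_neg, Matrix.trace_mul_comm] at h
  linarith

theorem hsSq_mul_one_sub_skew {S : Matrix (Fin n) (Fin n) ℝ} (hS : Sᵀ = -S)
    (M : Matrix (Fin n) (Fin n) ℝ) : hsSq (M * (1 - S)) = hsSq M + hsSq (M * S) := by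
  have h1 := trace_mul_eq_zero_of_symm_of_skew (A := Mᵀ * M) (by simp) hS
  have h2 : Matrix.trace (S * (Mᵀ * M)) = 0 := by rw [Matrix.trace_mul_comm, h1]
  have h3 : (M * (1 - S))ᵀ * (M * (1 - S))
      = Mᵀ * M - (Mᵀ * M) * S + S * (Mᵀ * M) + (M * S)ᵀ * (M * S) := by
    simp only [Matrix.transpose_mul, Matrix.transpose_sub, hS, Matrix.transpose_one]
    noncomm_ring
  rw [hsSq, h3]
  simp [hsSq, h1, h2]

theorem hsSq_mul_inv_one_sub_skew_le {S : Matrix (Fin n) (Fin n) ℝ} (hS : Sᵀ = -S)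
    {T : Matrix (Fin n) (Fin n) ℝ} (hT : T * (1 - S) = 1) (M : Matrix (Fin n) (Fin n) ℝ) :
    hsSq (M * T) ≤ hsSq M := by
  have h := hsSq_mul_one_sub_skew hS (M * T)
  rw [Matrix.mul_assoc M, hT, Matrix.mul_one] at h
  linarith [hsSq_nonneg (M * T * S)]

theorem hsSq_inv_one_sub_skew_mul_le {S : Matrix (Fin n) (Fin n) ℝ} (hS : Sᵀ = -S)
    {T : Matrix (Fin n) (Fin n) ℝ} (hT : (1 - S) * T = 1) (M : Matrix (Fin n) (Fin n) ℝ) :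
    hsSq (T * M) ≤ hsSq M := by
  rw [← hsSq_transpose (T * M), ← hsSq_transpose M, Matrix.transpose_mul]
  refine hsSq_mul_inv_one_sub_skew_le (S := -S) (by simp [hS]) ?_ _
  have h := congrArg Matrix.transpose hT
  simpa [Matrix.transpose_mul, hS] using h

theorem isUnit_det_one_sub_skew {S : Matrix (Fin n) (Fin n) ℝ} (hS : Sᵀ = -S) :
    IsUnit (1 - S).det := by
  rw [isUnit_iff_ne_zero]
  intro h0
  obtain ⟨v, hv, h⟩ := Matrix.exists_mulVec_eq_zero_iff.2 h0
  apply hv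
  rw [Matrix.sub_mulVec, Matrix.one_mulVec, sub_eq_zero] at h
  have h1 : v ⬝ᵥ S *ᵥ v = -(v ⬝ᵥ S *ᵥ v) := by
    conv_lhs => rw [Matrix.dotProduct_mulVec, ← Matrix.mulVec_transpose, hS, dotProduct_comm]
    simp [Matrix.neg_mulVec]
  rw [← h] at h1
  exact dotProduct_self_eq_zero.1 (by linarith)

theorem dotProduct_mulVec_self_le (B : Matrix (Fin n) (Fin n) ℝ) (v : Fin n → ℝ) :
    (B *ᵥ v) ⬝ᵥ (B *ᵥ v) ≤ hsSq B * (v ⬝ᵥ v) := by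
  rw [hsSq_eq_sum, Finset.sum_mul]
  refine Finset.sum_le_sum fun i _ => ?_
  have h := Finset.sum_mul_sq_le_sq_mul_sq Finset.univ (B i) v
  simpa [Matrix.mulVec, dotProduct, sq] using h

theorem isUnit_det_add_one {z : Matrix (Fin n) (Fin n) ℝ} (hz : hsSq (z - 1) ≤ 1) :
    IsUnit (z + 1).det := by
  rw [isUnit_iff_ne_zero]
  intro h0
  obtain ⟨v, hv, h⟩ := Matrix.exists_mulVec_eq_zero_iff.2 h0
  apply hv
  rw [Matrix.add_mulVec, Matrix.one_mulVec, add_eq_zero_iff_eq_neg] at h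
  have h1 := dotProduct_mulVec_self_le (z - 1) v
  have hvv : 0 ≤ v ⬝ᵥ v := Finset.sum_nonneg fun i _ => mul_self_nonneg _
  rw [Matrix.sub_mulVec, Matrix.one_mulVec, h] at h1
  have h2 : (-v - v) ⬝ᵥ (-v - v) = 4 * (v ⬝ᵥ v) := by
    simp only [dotProduct_sub, sub_dotProduct, neg_dotProduct, dotProduct_neg]; ring
  refine dotProduct_self_eq_zero.1 ?_
  nlinarith

end HilbertSchmidt

/-! ### The special orthogonal group and its Cayley paths -/

section Cayley

variable {n : ℕ}

theorem transpose_mul_of_mem_SO {a : Matrix (Fin n) (Fin n) ℝ} (ha : a ∈ SO n) : aᵀ * a = 1 :=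
  mul_eq_one_comm.1 ha.1

theorem mul_mem_SO {a b : Matrix (Fin n) (Fin n) ℝ} (ha : a ∈ SO n) (hb : b ∈ SO n) :
    a * b ∈ SO n := by
  refine ⟨?_, by rw [Matrix.det_mul, ha.2, hb.2, one_mul]⟩
  rw [Matrix.transpose_mul, Matrix.mul_assoc, ← Matrix.mul_assoc b, hb.1, Matrix.one_mul, ha.1]

theorem transpose_mem_SO {a : Matrix (Fin n) (Fin n) ℝ} (ha : a ∈ SO n) : aᵀ ∈ SO n :=
  ⟨by simpa using transpose_mul_of_mem_SO ha, by rw [Matrix.det_transpose, ha.2]⟩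

/-- The Cayley path `t ↦ (1 + tS)(1 - tS)⁻¹`. -/
def cayley (S : Matrix (Fin n) (Fin n) ℝ) (t : ℝ) : Matrix (Fin n) (Fin n) ℝ :=
  (1 + t • S) * (1 - t • S)⁻¹

theorem cayley_zero (S : Matrix (Fin n) (Fin n) ℝ) : cayley S 0 = 1 := by simp [cayley]

theorem continuous_cayley {S : Matrix (Fin n) (Fin n) ℝ} (hS : Sᵀ = -S) :
    Continuous (cayley S) := by
  have hd : ∀ t : ℝ, (1 - t • S).det ≠ 0 := fun t =>
    (isUnit_det_one_sub_skew (S := t • S) (by simp [hS])).ne_zero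
  have hc : Continuous fun t : ℝ => 1 - t • S := by fun_prop
  unfold cayley
  simp only [Matrix.inv_def, Ring.inverse_eq_inv']
  exact (by fun_prop : Continuous fun t : ℝ => 1 + t • S).matrix_mul
    ((hc.matrix_det.inv₀ hd).smul hc.matrix_adjugate)

theorem cayley_mem_SO {S : Matrix (Fin n) (Fin n) ℝ} (hS : Sᵀ = -S) (t : ℝ) :
    cayley S t ∈ SO n := by
  have hT : (t • S)ᵀ = -(t • S) := by simp [hS]
  unfold cayley
  generalize t • S = T at hT
  have hu := isUnit_det_one_sub_skew hT
  have hu' : IsUnit (1 + T).det := by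
    simpa using isUnit_det_one_sub_skew (S := -T) (by simp [hT])
  have hdet : (1 + T).det = (1 - T).det := by
    rw [← Matrix.det_transpose]; simp [hT, sub_eq_add_neg]
  constructor
  · rw [Matrix.transpose_mul, Matrix.transpose_nonsing_inv]
    have e1 : (1 - T)ᵀ = 1 + T := by simp [hT]
    have e2 : (1 + T)ᵀ = 1 - T := by simp [hT, sub_eq_add_neg]
    have hcomm : (1 + T) * (1 - T) = (1 - T) * (1 + T) := by noncomm_ring
    rw [e1, e2, Matrix.mul_assoc, ← Matrix.mul_assoc (1 - T)⁻¹, ← Matrix.mul_inv_rev, hcomm,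
      Matrix.mul_inv_rev]
    rw [Matrix.mul_assoc, Matrix.nonsing_inv_mul _ hu, Matrix.mul_one, Matrix.mul_nonsing_inv _ hu']
  · rw [Matrix.det_mul, Matrix.det_nonsing_inv, hdet, Ring.mul_inverse_cancel _ hu]

theorem hsSq_cayley_sub_le {S : Matrix (Fin n) (Fin n) ℝ} (hS : Sᵀ = -S) (s t : ℝ) :
    hsSq (cayley S s - cayley S t) ≤ (s - t) ^ 2 * (4 * hsSq S) := by
  have hs : (s • S)ᵀ = -(s • S) := by simp [hS]
  have ht : (t • S)ᵀ = -(t • S) := by simp [hS]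
  have us := isUnit_det_one_sub_skew hs
  have ut := isUnit_det_one_sub_skew ht
  have key : ∀ r : ℝ, IsUnit (1 - r • S).det →
      cayley S r = (2 : ℝ) • (1 - r • S)⁻¹ - 1 := fun r hr => by
    have h := Matrix.mul_nonsing_inv _ hr
    have e : (1 + r • S) = (2 : ℝ) • 1 - (1 - r • S) := by rw [two_smul]; abel
    rw [cayley, e, Matrix.sub_mul, h, Matrix.smul_mul, Matrix.one_mul]
  have hd : (1 - s • S)⁻¹ - (1 - t • S)⁻¹ = (s - t) • ((1 - s • S)⁻¹ * S * (1 - t • S)⁻¹) := by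
    have e : (s - t) • S = (1 - t • S) - (1 - s • S) := by rw [sub_smul]; abel
    rw [← Matrix.smul_mul, ← Matrix.mul_smul, e, Matrix.mul_sub, Matrix.nonsing_inv_mul _ us,
      Matrix.sub_mul, Matrix.mul_assoc, Matrix.mul_nonsing_inv _ ut, Matrix.mul_one, Matrix.one_mul]
  have e : cayley S s - cayley S t
      = (2 * (s - t)) • ((1 - s • S)⁻¹ * S * (1 - t • S)⁻¹) := by
    rw [key s us, key t ut, mul_smul, ← hd, smul_sub]; abel
  have h1 := hsSq_mul_inv_one_sub_skew_le ht (Matrix.nonsing_inv_mul _ ut) ((1 - s • S)⁻¹ * S)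
  have h2 := hsSq_inv_one_sub_skew_mul_le hs (Matrix.mul_nonsing_inv _ us) S
  rw [e, hsSq_smul]
  nlinarith [mul_le_mul_of_nonneg_left (h1.trans h2) (sq_nonneg (s - t))]

/-- An orthogonal matrix close to the identity is the endpoint of a short Cayley path. -/
theorem exists_skew_cayley_one_eq {z : Matrix (Fin n) (Fin n) ℝ} (hz : z * zᵀ = 1)
    (h1 : hsSq (z - 1) ≤ 1) :
    ∃ S : Matrix (Fin n) (Fin n) ℝ, Sᵀ = -S ∧ cayley S 1 = z ∧
      4 * hsSq S ≤ hsSq (z - 1) + hsSq (z - 1) ^ 2 := by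
  have hu := isUnit_det_add_one h1
  set P := (z + 1)⁻¹
  have hr : (z + 1) * P = 1 := Matrix.mul_nonsing_inv _ hu
  have hl : P * (z + 1) = 1 := Matrix.nonsing_inv_mul _ hu
  have hl' : (zᵀ + 1) * Pᵀ = 1 := by simpa using congrArg Matrix.transpose hl
  have hPP : P + Pᵀ = 1 := by
    have e : (zᵀ + 1) + (z + 1) = (z + 1) * (zᵀ + 1) := by
      rw [Matrix.add_mul, Matrix.mul_add, hz]; simp; abel
    calc P + Pᵀ = P * ((zᵀ + 1) + (z + 1)) * Pᵀ := by
          rw [Matrix.mul_add, hl, Matrix.add_mul, Matrix.mul_assoc, hl']; simp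
      _ = 1 := by rw [e, ← Matrix.mul_assoc, hl, Matrix.one_mul, hl']
  have hS : (1 - (2 : ℝ) • P)ᵀ = -(1 - (2 : ℝ) • P) := by
    have : Pᵀ = 1 - P := by rw [← hPP]; abel
    rw [Matrix.transpose_sub, Matrix.transpose_smul, this, Matrix.transpose_one, smul_sub, two_smul,
      two_smul]
    abel
  have hend : z * (1 - (1 - (2 : ℝ) • P)) = 1 + (1 - (2 : ℝ) • P) := by
    rw [Matrix.add_mul, Matrix.one_mul] at hr
    have : z * P = 1 - P := by rw [← hr]; abel
    rw [_root_.sub_sub_cancel, Matrix.mul_smul, this, smul_sub, two_smul, two_smul]; abel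
  refine ⟨1 - (2 : ℝ) • P, hS, ?_, ?_⟩
  · have hu' := isUnit_det_one_sub_skew hS
    rw [cayley, one_smul, ← hend, Matrix.mul_assoc, Matrix.mul_nonsing_inv _ hu', Matrix.mul_one]
  · generalize 1 - (2 : ℝ) • P = S at hS hend
    have e : (z - 1) * (1 - S) = (2 : ℝ) • S := by
      rw [Matrix.sub_mul, hend, two_smul, Matrix.one_mul]; abel
    have h2 := hsSq_mul_one_sub_skew hS (z - 1)
    rw [e, hsSq_smul] at h2
    have h3 := hsSq_mul_le (z - 1) S
    have h4 := hsSq_nonneg S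
    have h5 := hsSq_nonneg (z - 1)
    have h6 : hsSq S ≤ hsSq (z - 1) := by nlinarith
    nlinarith

end Cayley

/-! ### The intrinsic distance -/

section Intrinsic

variable {n : ℕ}

theorem hsDist_le_DSO (a b : Matrix (Fin n) (Fin n) ℝ) : hsDist a b ≤ DSO n a b := by
  refine le_iInf fun γ => le_iInf fun _ => le_iInf fun _ => le_iInf fun h0 => le_iInf fun h1 => ?_
  refine le_trans ?_ (le_iSup₂_of_le 1 (fun i : Fin 2 => ((i : ℕ) : ℝ)) (le_iSup_of_le
    (fun i j h => Nat.cast_le.2 h) (le_iSup_of_le (by simp) (le_iSup_of_le (by simp) le_rfl))))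
  simp [h0, h1]

theorem DSO_mul_left_le {a : Matrix (Fin n) (Fin n) ℝ} (ha : a ∈ SO n)
    (x y : Matrix (Fin n) (Fin n) ℝ) : DSO n (a * x) (a * y) ≤ DSO n x y := by
  refine le_iInf fun γ => le_iInf fun hc => le_iInf fun hm => le_iInf fun h0 => le_iInf fun h1 => ?_
  refine iInf_le_of_le (fun t => a * γ t) (iInf_le_of_le (by fun_prop) (iInf_le_of_le
    (fun t ht => mul_mem_SO ha (hm ht)) (iInf_le_of_le (by simp [h0]) (iInf_le_of_le (by simp [h1])
      (le_of_eq ?_)))))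
  simp only [pathLengthE, hsDist_eq, ← Matrix.mul_sub, hsSq_mul_left (transpose_mul_of_mem_SO ha)]

theorem sum_succ_sub_castSucc (k : ℕ) (t : Fin (k + 1) → ℝ) :
    ∑ i : Fin k, (t i.succ - t i.castSucc) = t (Fin.last k) - t 0 := by
  have h1 := Fin.sum_univ_succ t
  have h2 := Fin.sum_univ_castSucc t
  rw [Finset.sum_sub_distrib]
  linarith

theorem pathLengthE_le_of_lipschitz {X : Type*} {d : X → X → ℝ≥0∞} {γ : ℝ → X} {L : ℝ}
    (hL : 0 ≤ L) (h : ∀ s t, s ≤ t → d (γ s) (γ t) ≤ ENNReal.ofReal ((t - s) * L)) :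
    pathLengthE d γ ≤ ENNReal.ofReal L := by
  refine iSup_le fun k => iSup_le fun t => iSup_le fun hm => iSup_le fun h0 => iSup_le fun h1 => ?_
  have hle : ∀ i : Fin k, t i.castSucc ≤ t i.succ := fun i => hm i.castSucc_le_succ
  calc _ ≤ ∑ i : Fin k, ENNReal.ofReal ((t i.succ - t i.castSucc) * L) :=
        Finset.sum_le_sum fun i _ => h _ _ (hle i)
    _ = ENNReal.ofReal L := by
        rw [← ENNReal.ofReal_sum_of_nonneg fun i _ => mul_nonneg (sub_nonneg.2 (hle i)) hL,
          ← Finset.sum_mul, sum_succ_sub_castSucc, h0, h1]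
        simp

theorem DSO_le_of_hsSq_le_one {a b : Matrix (Fin n) (Fin n) ℝ} (ha : a ∈ SO n) (hb : b ∈ SO n)
    (h : hsSq (a - b) ≤ 1) :
    DSO n a b ≤ ENNReal.ofReal (Real.sqrt (hsSq (a - b) + hsSq (a - b) ^ 2)) := by
  have hz := mul_mem_SO hb (transpose_mem_SO ha)
  have hq : hsSq (b * aᵀ - 1) = hsSq (a - b) := by
    rw [← hsSq_mul_right ha.1, Matrix.sub_mul, Matrix.mul_assoc, transpose_mul_of_mem_SO ha,
      Matrix.one_mul, Matrix.mul_one, ← hsSq_neg, neg_sub]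
  obtain ⟨S, hS, h1, hle⟩ := exists_skew_cayley_one_eq hz.1 (hq.trans_le h)
  rw [hq] at hle
  refine iInf_le_of_le (fun t => cayley S t * a) (iInf_le_of_le
    ((continuous_cayley hS).matrix_mul continuous_const).continuousOn (iInf_le_of_le
    (fun t _ => mul_mem_SO (cayley_mem_SO hS t) ha) (iInf_le_of_le (by simp [cayley_zero])
    (iInf_le_of_le ?_ (pathLengthE_le_of_lipschitz (Real.sqrt_nonneg _) fun s t hst => ?_)))))
  · simp only [h1]
    rw [Matrix.mul_assoc, transpose_mul_of_mem_SO ha, Matrix.mul_one]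
  · rw [hsDist_eq, ← Matrix.sub_mul, hsSq_mul_right ha.1]
    refine ENNReal.ofReal_le_ofReal (Real.sqrt_le_iff.2
      ⟨mul_nonneg (sub_nonneg.2 hst) (Real.sqrt_nonneg _), ?_⟩)
    rw [mul_pow, Real.sq_sqrt (by have := hsSq_nonneg (a - b); positivity)]
    refine (hsSq_cayley_sub_le hS s t).trans ?_
    nlinarith [mul_le_mul_of_nonneg_left hle (sq_nonneg (s - t))]

end Intrinsic

/-! ### The elementary rotations -/

section Rotation

variable {n : ℕ}

/-- The orthogonal projection onto the plane spanned by `e_i` and `e_j`. -/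
def planeProj (i j : Fin n) : Matrix (Fin n) (Fin n) ℝ :=
  Matrix.single i i 1 + Matrix.single j j 1

/-- The infinitesimal generator of the rotations `kacRot i j`. -/
def planeGen (i j : Fin n) : Matrix (Fin n) (Fin n) ℝ :=
  Matrix.single j i 1 - Matrix.single i j 1

theorem kacRot_eq {i j : Fin n} (hij : i ≠ j) (θ : ℝ) :
    kacRot i j θ = 1 + (Real.cos θ - 1) • planeProj i j + Real.sin θ • planeGen i j := by
  ext k l
  simp only [kacRot, planeProj, planeGen, Matrix.of_apply, Matrix.add_apply, Matrix.smul_apply,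
    Matrix.sub_apply, Matrix.single_apply, Matrix.one_apply, smul_eq_mul]
  by_cases h1 : k = i <;> by_cases h2 : l = i <;> by_cases h3 : k = j <;> by_cases h4 : l = j <;>
    by_cases h5 : k = l <;> subst_vars <;> simp_all [eq_comm]

theorem kacRot_add {i j : Fin n} (hij : i ≠ j) (θ φ : ℝ) :
    kacRot i j (θ + φ) = kacRot i j θ * kacRot i j φ := by
  have hPP : planeProj i j * planeProj i j = planeProj i j := by
    simp [planeProj, Matrix.add_mul, Matrix.mul_add, hij, hij.symm]
  have hPG : planeProj i j * planeGen i j = planeGen i j := by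
    simp [planeProj, planeGen, Matrix.add_mul, Matrix.mul_sub, hij, hij.symm]
  have hGP : planeGen i j * planeProj i j = planeGen i j := by
    simp [planeProj, planeGen, Matrix.sub_mul, Matrix.mul_add, hij, hij.symm]; abel
  have hGG : planeGen i j * planeGen i j = -planeProj i j := by
    simp [planeProj, planeGen, Matrix.sub_mul, Matrix.mul_sub, hij, hij.symm]; abel
  simp only [kacRot_eq hij, Matrix.add_mul, Matrix.mul_add, Matrix.one_mul, Matrix.mul_one,
    Matrix.smul_mul, Matrix.mul_smul, hPP, hPG, hGP, hGG, Real.cos_add, Real.sin_add]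
  module

theorem kacRot_zero {i j : Fin n} (hij : i ≠ j) : kacRot i j 0 = 1 := by
  simp [kacRot_eq hij]

theorem transpose_kacRot {i j : Fin n} (hij : i ≠ j) (θ : ℝ) :
    (kacRot i j θ)ᵀ = kacRot i j (-θ) := by
  simp only [kacRot_eq hij, planeProj, planeGen, Real.cos_neg, Real.sin_neg, Matrix.transpose_add,
    Matrix.transpose_sub, Matrix.transpose_smul, Matrix.transpose_one, Matrix.transpose_single]
  module

theorem kacRot_mem_SO {i j : Fin n} (hij : i ≠ j) (θ : ℝ) : kacRot i j θ ∈ SO n := by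
  have h : ∀ θ, kacRot i j θ * (kacRot i j θ)ᵀ = 1 := fun θ => by
    rw [transpose_kacRot hij, ← kacRot_add hij, add_neg_cancel, kacRot_zero hij]
  refine ⟨h θ, ?_⟩
  have h2 := congrArg Matrix.det (h (θ / 2))
  rw [Matrix.det_mul, Matrix.det_transpose, Matrix.det_one, ← Matrix.det_mul, ← kacRot_add hij,
    add_halves] at h2
  exact h2

theorem kacRot_periodic (i j : Fin n) : Function.Periodic (kacRot i j) (2 * Real.pi) := by
  intro θ
  simp [kacRot]

theorem measurable_kacRot_mul (i j : Fin n) (x : Matrix (Fin n) (Fin n) ℝ) :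
    Measurable fun θ => kacRot i j θ * x := by
  refine measurable_pi_iff.2 fun k => measurable_pi_iff.2 fun l => ?_
  simp only [Matrix.mul_apply]
  refine Finset.measurable_sum _ fun m _ => Measurable.mul_const ?_ _
  simp only [kacRot, Matrix.of_apply]
  split_ifs <;> fun_prop

theorem trace_kacRot_mul {i j : Fin n} (hij : i ≠ j) (θ : ℝ) (z : Matrix (Fin n) (Fin n) ℝ) :
    Matrix.trace (kacRot i j θ * z) =
      Matrix.trace z + (Real.cos θ - 1) * (z i i + z j j) + Real.sin θ * (z i j - z j i) := by
  simp [kacRot_eq hij, planeProj, planeGen, Matrix.add_mul, Matrix.sub_mul, Matrix.trace_single_mul]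
  ring

theorem hsSq_one_sub_of_mem_SO {z : Matrix (Fin n) (Fin n) ℝ} (hz : z ∈ SO n) :
    hsSq (1 - z) = 2 * n - 2 * Matrix.trace z := by
  have e : (1 - z)ᵀ * (1 - z) = 1 - z - zᵀ + zᵀ * z := by
    rw [Matrix.transpose_sub, Matrix.transpose_one]; noncomm_ring
  rw [hsSq, e, transpose_mul_of_mem_SO hz]
  simp; ring

theorem diag_le_one_of_mem_SO {z : Matrix (Fin n) (Fin n) ℝ} (hz : z ∈ SO n) (i : Fin n) :
    z i i ≤ 1 := by
  have h := congrFun (congrFun hz.1 i) i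
  simp only [Matrix.mul_apply, Matrix.transpose_apply, Matrix.one_apply_eq] at h
  have h2 := Finset.single_le_sum (f := fun j => z i j * z i j)
    (fun j _ => mul_self_nonneg (z i j)) (Finset.mem_univ i)
  nlinarith

/-- Rotating by the angle `arcsin ((z i j - z j i) / 2)` brings `z` closer to the identity. -/
theorem hsSq_one_sub_kacRot_mul_le {i j : Fin n} (hij : i ≠ j) {z : Matrix (Fin n) (Fin n) ℝ}
    (hz : z ∈ SO n) {w : ℝ} (hw : w = (z i j - z j i) / 2) (hw1 : w ^ 2 ≤ 1) :
    hsSq (1 - kacRot i j (Real.arcsin w) * z) ≤ hsSq (1 - z) - 2 * w ^ 2 + 2 * w ^ 4 := by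
  have hab := abs_le.1 ((sq_le_one_iff_abs_le_one w).1 hw1)
  rw [hsSq_one_sub_of_mem_SO (mul_mem_SO (kacRot_mem_SO hij _) hz), hsSq_one_sub_of_mem_SO hz,
    trace_kacRot_mul hij, Real.sin_arcsin hab.1 hab.2]
  have hc0 := Real.cos_arcsin_nonneg w
  have hc : Real.cos (Real.arcsin w) ^ 2 = 1 - w ^ 2 := by
    rw [Real.cos_arcsin, Real.sq_sqrt (by linarith)]
  set κ := Real.cos (Real.arcsin w)
  have hκ1 : κ ≤ 1 := Real.cos_le_one _
  have hi := diag_le_one_of_mem_SO hz i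
  have hj := diag_le_one_of_mem_SO hz j
  have h1 : 1 - κ ≤ w ^ 2 / 2 + w ^ 4 / 2 := by
    have e : w ^ 2 = 1 - κ ^ 2 := by linarith
    have e4 : w ^ 4 = (1 - κ ^ 2) ^ 2 := by rw [← e]; ring
    rw [e, e4]
    nlinarith [mul_nonneg (sq_nonneg (1 - κ)) (by nlinarith : 0 ≤ (1 + κ) ^ 2 - 1)]
  have h2 : (1 - κ) * (z i i + z j j) ≤ (1 - κ) * 2 :=
    mul_le_mul_of_nonneg_left (by linarith) (by linarith)
  have h3 : z i j - z j i = 2 * w := by linarith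
  rw [h3]
  nlinarith

end Rotation

/-! ### Averages over pairs of coordinates -/

section Pairs

variable {n : ℕ}

theorem ne_of_mem_pairs {p : Fin n × Fin n} (hp : p ∈ pairs n) : p.1 ≠ p.2 :=
  (Finset.mem_filter.1 hp).2.ne

theorem sum_sum_eq_two_mul_sum_pairs (f : Fin n → Fin n → ℝ) (hsymm : ∀ i j, f i j = f j i)
    (hdiag : ∀ i, f i i = 0) : ∑ i, ∑ j, f i j = 2 * ∑ p ∈ pairs n, f p.1 p.2 := by
  have hsplit : ∀ i j, f i j = (if i < j then f i j else 0) + (if j < i then f j i else 0) := by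
    intro i j
    rcases lt_trichotomy i j with h | h | h
    · simp [h, h.not_gt]
    · simp [h, hdiag]
    · simp [h, h.not_gt, hsymm i j]
  have hp : ∑ p ∈ pairs n, f p.1 p.2 = ∑ i, ∑ j, if i < j then f i j else 0 := by
    rw [pairs, Finset.sum_filter, Fintype.sum_prod_type]
  calc ∑ i, ∑ j, f i j
      = ∑ i, ∑ j, ((if i < j then f i j else 0) + (if j < i then f j i else 0)) :=
        Finset.sum_congr rfl fun i _ => Finset.sum_congr rfl fun j _ => hsplit i j
    _ = _ := by
        simp only [Finset.sum_add_distrib]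
        rw [Finset.sum_comm (f := fun i j => if j < i then f j i else 0), hp]
        ring

theorem card_pairs (n : ℕ) : ((pairs n).card : ℝ) = (n.choose 2 : ℝ) := by
  have h := sum_sum_eq_two_mul_sum_pairs (fun i j : Fin n => if i = j then (0 : ℝ) else 1)
    (by simp [eq_comm]) (by simp)
  have h1 : ∑ p ∈ pairs n, (if p.1 = p.2 then (0 : ℝ) else 1) = (pairs n).card := by
    rw [Finset.card_eq_sum_ones, Nat.cast_sum]
    refine Finset.sum_congr rfl fun p hp => ?_
    simp [ne_of_mem_pairs hp]
  have h2 : ∀ i j : Fin n, (if i = j then (0 : ℝ) else 1) = 1 - if i = j then 1 else 0 := by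
    intro i j; split_ifs <;> simp
  rw [h1] at h
  simp only [h2, Finset.sum_sub_distrib] at h
  rw [Nat.cast_choose_two]
  simp at h
  linarith

theorem sum_pairs_skew_part {z : Matrix (Fin n) (Fin n) ℝ} (hz : z ∈ SO n) :
    ∑ p ∈ pairs n, 2 * ((z p.1 p.2 - z p.2 p.1) / 2) ^ 2 ≤ hsSq (1 - z) ∧
      hsSq (1 - z) - hsSq (1 - z) ^ 2 / 4 ≤
        ∑ p ∈ pairs n, 2 * ((z p.1 p.2 - z p.2 p.1) / 2) ^ 2 := by
  have hskew := sum_sum_eq_two_mul_sum_pairs (fun i j => 2 * ((z i j - z j i) / 2) ^ 2)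
    (fun i j => by ring) (fun i => by ring)
  have hq : hsSq (z - zᵀ) = ∑ i, ∑ j, 2 * (2 * ((z i j - z j i) / 2) ^ 2) := by
    rw [hsSq_eq_sum]
    refine Finset.sum_congr rfl fun i _ => Finset.sum_congr rfl fun j _ => ?_
    simp; ring
  simp only [← Finset.mul_sum] at hq hskew ⊢
  set B := 1 - z with hB
  have hpar : hsSq (z - zᵀ) + hsSq (B + Bᵀ) = 4 * hsSq B := by
    have e : z - zᵀ = -(B - Bᵀ) := by rw [hB]; simp
    have e1 : (B - Bᵀ)ᵀ * (B - Bᵀ) + (B + Bᵀ)ᵀ * (B + Bᵀ)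
        = (2 : ℝ) • (Bᵀ * B) + (2 : ℝ) • (B * Bᵀ) := by
      simp only [Matrix.transpose_add, Matrix.transpose_sub, Matrix.transpose_transpose, two_smul]
      noncomm_ring
    have e2 := congrArg Matrix.trace e1
    rw [e, hsSq_neg]
    simp only [Matrix.trace_add, Matrix.trace_smul, Matrix.trace_mul_comm B, smul_eq_mul] at e2
    simp only [hsSq]
    linarith
  have hsym : B + Bᵀ = Bᵀ * B := by
    rw [hB, Matrix.transpose_sub, Matrix.transpose_one, Matrix.sub_mul, Matrix.mul_sub, Matrix.mul_sub,
      transpose_mul_of_mem_SO hz]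
    simp; abel
  have hle := hsSq_mul_le Bᵀ B
  rw [hsSq_transpose, ← hsym] at hle
  have h0 := hsSq_nonneg (B + Bᵀ)
  constructor <;> nlinarith

end Pairs

/-! ### Couplings -/

section Coupling

variable {n : ℕ}

theorem uniformAngle_map_add {X : Type*} [MeasurableSpace X] {g : ℝ → X} (hg : Measurable g)
    (hper : Function.Periodic g (2 * Real.pi)) (φ : ℝ) :
    uniformAngle.map (fun θ => g (θ + φ)) = uniformAngle.map g := by
  have hg' : Measurable fun θ => g (θ + φ) := hg.comp (measurable_add_const φ)
  ext s hs
  rw [Measure.map_apply hg' hs, Measure.map_apply hg hs, uniformAngle,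
    ← Measure.restrict_congr_set (Ioc_ae_eq_Icc (μ := volume)), Measure.smul_apply,
    Measure.smul_apply, Measure.restrict_apply (hg' hs), Measure.restrict_apply (hg hs)]
  congr 1
  have e : (fun θ => g (θ + φ)) ⁻¹' s ∩ Set.Ioc 0 (2 * Real.pi)
      = (fun θ => θ + φ) ⁻¹' (g ⁻¹' s ∩ Set.Ioc φ (φ + 2 * Real.pi)) := by
    ext θ
    simp only [Set.mem_inter_iff, Set.mem_preimage, Set.mem_Ioc]
    constructor <;> rintro ⟨h, h1, h2⟩ <;> exact ⟨h, by linarith, by linarith⟩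
  rw [e, measure_preimage_add_right]
  have h0 := isAddFundamentalDomain_Ioc Real.two_pi_pos 0
  rw [zero_add] at h0
  refine (isAddFundamentalDomain_Ioc Real.two_pi_pos φ).measure_set_eq h0 (hg hs) fun a => ?_
  ext θ
  simp only [Set.mem_preimage, hper.map_vadd_zmultiples a θ]

theorem uniformAngle_univ : uniformAngle Set.univ = 1 := by
  rw [uniformAngle, Measure.smul_apply, Measure.restrict_apply_univ, Real.volume_Icc, sub_zero,
    smul_eq_mul]
  exact ENNReal.inv_mul_cancel (by simp [Real.pi_pos]) ENNReal.ofReal_ne_top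

/-- The cost of the coupling that rotates `y` by an extra angle `φ p` in the plane `p`. -/
theorem wassersteinE_kacKernel_le (x y : Matrix (Fin n) (Fin n) ℝ) (φ : Fin n × Fin n → ℝ) :
    wassersteinE (DSO n) 2 (kacKernel n x) (kacKernel n y) ≤
      ((n.choose 2 : ℝ≥0∞)⁻¹ *
        ∑ p ∈ pairs n, DSO n x (kacRot p.1 p.2 (φ p) * y) ^ (2 : ℝ)) ^ (1 / 2 : ℝ) := by
  have hxy : ∀ p : Fin n × Fin n, Measurable fun θ =>
      (kacRot p.1 p.2 θ * x, kacRot p.1 p.2 (θ + φ p) * y) := fun p =>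
    (measurable_kacRot_mul p.1 p.2 x).prodMk
      ((measurable_kacRot_mul p.1 p.2 y).comp (measurable_add_const (φ p)))
  refine iInf₂_le_of_le ((n.choose 2 : ℝ≥0∞)⁻¹ • ∑ p ∈ pairs n, uniformAngle.map fun θ =>
    (kacRot p.1 p.2 θ * x, kacRot p.1 p.2 (θ + φ p) * y)) ⟨?_, ?_⟩ ?_
  · rw [Measure.map_smul, Measure.map_finset_sum measurable_fst.aemeasurable, kacKernel]
    congr 1
    refine Finset.sum_congr rfl fun p _ => ?_
    rw [Measure.map_map measurable_fst (hxy p)]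
    rfl
  · rw [Measure.map_smul, Measure.map_finset_sum measurable_snd.aemeasurable, kacKernel]
    congr 1
    refine Finset.sum_congr rfl fun p _ => ?_
    rw [Measure.map_map measurable_snd (hxy p)]
    exact uniformAngle_map_add (measurable_kacRot_mul p.1 p.2 y)
      (fun θ => by simp only [kacRot_periodic p.1 p.2 θ]) (φ p)
  · refine ENNReal.rpow_le_rpow ?_ (by norm_num)
    rw [lintegral_smul_measure, lintegral_finsetSum_measure, smul_eq_mul]
    gcongr with p hp
    have hij := ne_of_mem_pairs hp
    refine (lintegral_map_le _ _).trans ?_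
    calc _ ≤ ∫⁻ _, DSO n x (kacRot p.1 p.2 (φ p) * y) ^ (2 : ℝ) ∂uniformAngle := by
          refine lintegral_mono fun θ => ENNReal.rpow_le_rpow ?_ (by norm_num)
          simp only [kacRot_add hij, Matrix.mul_assoc]
          exact DSO_mul_left_le (kacRot_mem_SO hij θ) _ _
      _ = _ := by rw [lintegral_const, uniformAngle_univ, mul_one]

end Coupling

/-! ### Contraction estimates for the kernel -/

section Contraction

variable {n : ℕ}

theorem wassersteinE_kacKernel_le_DSO (hn : 2 ≤ n) (x y : Matrix (Fin n) (Fin n) ℝ) :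
    wassersteinE (DSO n) 2 (kacKernel n x) (kacKernel n y) ≤ DSO n x y := by
  refine (wassersteinE_kacKernel_le x y 0).trans (le_of_eq ?_)
  have hcard : (pairs n).card = n.choose 2 := by exact_mod_cast card_pairs n
  have hpos : n.choose 2 ≠ 0 := (Nat.choose_pos hn).ne'
  rw [Finset.sum_congr rfl fun p hp => by
    rw [Pi.zero_apply, kacRot_zero (ne_of_mem_pairs hp), Matrix.one_mul]]
  rw [Finset.sum_const, hcard, nsmul_eq_mul, ← mul_assoc,
    ENNReal.inv_mul_cancel (by exact_mod_cast hpos) (ENNReal.natCast_ne_top _), one_mul,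
    ← ENNReal.rpow_mul]
  norm_num

theorem sum_pow_four_le (s : Finset (Fin n × Fin n)) (w : Fin n × Fin n → ℝ) :
    ∑ p ∈ s, 2 * w p ^ 4 ≤ (∑ p ∈ s, 2 * w p ^ 2) ^ 2 := by
  refine le_trans (Finset.sum_le_sum fun p _ => ?_)
    (Finset.sum_sq_le_sq_sum_of_nonneg (f := fun p => 2 * w p ^ 2) fun p _ => by positivity)
  nlinarith [sq_nonneg (w p ^ 2)]

theorem wassersteinE_kacKernel_le_of_close (hn : 2 ≤ n) {x y : Matrix (Fin n) (Fin n) ℝ}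
    (hx : x ∈ SO n) (hy : y ∈ SO n) (hu : hsSq (x - y) ≤ 1) :
    wassersteinE (DSO n) 2 (kacKernel n x) (kacKernel n y) ≤
      ENNReal.ofReal (Real.sqrt (1 - 1 / (n.choose 2 : ℝ)) * Real.sqrt (hsSq (x - y)) +
        2 * Real.sqrt (hsSq (x - y)) ^ 2) := by
  have hN : (1 : ℝ) ≤ n.choose 2 := by exact_mod_cast Nat.choose_pos hn
  have hz := mul_mem_SO hy (transpose_mem_SO hx)
  set z := y * xᵀ with hzdef
  have hzx : z * x = y := by
    rw [hzdef, Matrix.mul_assoc, transpose_mul_of_mem_SO hx, Matrix.mul_one]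
  have hq : ∀ r : Matrix (Fin n) (Fin n) ℝ, hsSq (x - r * y) = hsSq (1 - r * z) := fun r => by
    rw [← hsSq_mul_right hx.1 (1 - r * z), Matrix.sub_mul, Matrix.one_mul, Matrix.mul_assoc, hzx]
  have hq1 : hsSq (x - y) = hsSq (1 - z) := by simpa using hq 1
  obtain ⟨hsum1, hsum2⟩ := sum_pairs_skew_part hz
  set w : Fin n × Fin n → ℝ := fun p => (z p.1 p.2 - z p.2 p.1) / 2
  change ∑ p ∈ pairs n, 2 * w p ^ 2 ≤ _ at hsum1
  change _ ≤ ∑ p ∈ pairs n, 2 * w p ^ 2 at hsum2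
  rw [← hq1] at hsum1 hsum2
  set u := hsSq (x - y)
  have hu0 : 0 ≤ u := hsSq_nonneg _
  have hterm : ∀ p ∈ pairs n, 0 ≤ u - 2 * w p ^ 2 + 2 * w p ^ 4 + u ^ 2 ∧
      DSO n x (kacRot p.1 p.2 (Real.arcsin (w p)) * y) ^ (2 : ℝ) ≤
        ENNReal.ofReal (u - 2 * w p ^ 2 + 2 * w p ^ 4 + u ^ 2) := by
    intro p hp
    have hij := ne_of_mem_pairs hp
    have hwp : 2 * w p ^ 2 ≤ u :=
      (Finset.single_le_sum (f := fun p => 2 * w p ^ 2) (fun p _ => by positivity) hp).trans hsum1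
    have hv := hsSq_one_sub_kacRot_mul_le hij hz (w := w p) rfl (by nlinarith)
    rw [← hq, ← hq1] at hv
    have hv0 := hsSq_nonneg (x - kacRot p.1 p.2 (Real.arcsin (w p)) * y)
    have hvu : hsSq (x - kacRot p.1 p.2 (Real.arcsin (w p)) * y) ≤ u := by
      nlinarith [sq_nonneg (w p)]
    have hD := DSO_le_of_hsSq_le_one hx (mul_mem_SO (kacRot_mem_SO hij _) hy) (hvu.trans hu)
    set v := hsSq (x - kacRot p.1 p.2 (Real.arcsin (w p)) * y)
    have hvv : v + v ^ 2 ≤ u - 2 * w p ^ 2 + 2 * w p ^ 4 + u ^ 2 := by nlinarith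
    refine ⟨by nlinarith, (ENNReal.rpow_le_rpow hD zero_le_two).trans ?_⟩
    rw [ENNReal.rpow_two, ← ENNReal.ofReal_pow (Real.sqrt_nonneg _), Real.sq_sqrt (by positivity)]
    exact ENNReal.ofReal_le_ofReal hvv
  have hreal : (n.choose 2 : ℝ)⁻¹ * ∑ p ∈ pairs n, (u - 2 * w p ^ 2 + 2 * w p ^ 4 + u ^ 2) ≤
      (1 - 1 / (n.choose 2 : ℝ)) * u + 3 * u ^ 2 := by
    have h4 := sum_pow_four_le (pairs n) w
    have h5 : (∑ p ∈ pairs n, 2 * w p ^ 2) ^ 2 ≤ u ^ 2 :=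
      pow_le_pow_left₀ (Finset.sum_nonneg fun p _ => by positivity) hsum1 2
    rw [inv_mul_le_iff₀ (by linarith)]
    simp only [Finset.sum_add_distrib, Finset.sum_sub_distrib, Finset.sum_const, nsmul_eq_mul,
      card_pairs]
    have e : (n.choose 2 : ℝ) * ((1 - 1 / (n.choose 2 : ℝ)) * u + 3 * u ^ 2)
        = n.choose 2 * u - u + 3 * (n.choose 2 * u ^ 2) := by
      field_simp
    rw [e]
    nlinarith [mul_le_mul_of_nonneg_right hN (sq_nonneg u)]
  have hs0 : (0 : ℝ) ≤ 1 - 1 / (n.choose 2 : ℝ) := by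
    rw [sub_nonneg, div_le_one (by linarith)]; exact hN
  refine (wassersteinE_kacKernel_le x y fun p => Real.arcsin (w p)).trans ?_
  calc _ ≤ (ENNReal.ofReal ((1 - 1 / (n.choose 2 : ℝ)) * u + 3 * u ^ 2)) ^ (1 / 2 : ℝ) := by
        refine ENNReal.rpow_le_rpow ?_ (by norm_num)
        refine le_trans ?_ (ENNReal.ofReal_le_ofReal hreal)
        rw [ENNReal.ofReal_mul (by positivity), ENNReal.ofReal_inv_of_pos (by linarith),
          ENNReal.ofReal_natCast, ENNReal.ofReal_sum_of_nonneg fun p hp => (hterm p hp).1]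
        gcongr with p hp
        exact (hterm p hp).2
    _ ≤ _ := by
        rw [ENNReal.ofReal_rpow_of_nonneg (by positivity) (by norm_num), ← Real.sqrt_eq_rpow]
        refine ENNReal.ofReal_le_ofReal (Real.sqrt_le_iff.2 ⟨by positivity, ?_⟩)
        have h1 := Real.sq_sqrt hs0
        have h2 := Real.sq_sqrt hu0
        rw [h2]
        have e : (√(1 - 1 / (n.choose 2 : ℝ)) * √u + 2 * u) ^ 2
            = √(1 - 1 / (n.choose 2 : ℝ)) ^ 2 * √u ^ 2 + 4 * u ^ 2
              + 4 * (√(1 - 1 / (n.choose 2 : ℝ)) * √u * u) := by ring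
        rw [e, h1, h2]
        have : 0 ≤ √(1 - 1 / (n.choose 2 : ℝ)) * √u * u := by positivity
        nlinarith [sq_nonneg u]

end Contraction

/-- For every `n ≥ 2` there is a constant `c > 0` such that for all `x, y ∈ SO(n)`,
`W_{D,2}(K_x, K_y) ≤ √(1 - 1/C(n,2)) · D(x,y) + c · D(x,y)²`.  In particular the map
`x ↦ K_x` from `(SO(n), D)` to the probability measures with the `W_{D,2}` metric is
locally `√(1 - 1/C(n,2))`-Lipschitz. -/
theorem kac_walk_local_contraction (n : ℕ) (hn : 2 ≤ n) :
    ∃ c : ℝ, 0 < c ∧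
      (∀ x ∈ SO n, ∀ y ∈ SO n,
        wassersteinE (DSO n) 2 (kacKernel n x) (kacKernel n y) ≤
          ENNReal.ofReal (Real.sqrt (1 - 1 / (n.choose 2 : ℝ))) * DSO n x y +
            ENNReal.ofReal c * DSO n x y ^ (2 : ℕ)) ∧
      ∀ x ∈ SO n, ∀ C' : ℝ, Real.sqrt (1 - 1 / (n.choose 2 : ℝ)) < C' →
        ∃ δ : ℝ, 0 < δ ∧ ∀ y ∈ SO n, DSO n x y < ENNReal.ofReal δ →
          wassersteinE (DSO n) 2 (kacKernel n x) (kacKernel n y) ≤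
            ENNReal.ofReal C' * DSO n x y := by
  have main : ∀ x ∈ SO n, ∀ y ∈ SO n,
      wassersteinE (DSO n) 2 (kacKernel n x) (kacKernel n y) ≤
        ENNReal.ofReal (Real.sqrt (1 - 1 / (n.choose 2 : ℝ))) * DSO n x y +
          ENNReal.ofReal 2 * DSO n x y ^ (2 : ℕ) := by
    intro x hx y hy
    rcases le_total 1 (DSO n x y) with h | h
    · calc _ ≤ DSO n x y := wassersteinE_kacKernel_le_DSO hn x y
        _ ≤ ENNReal.ofReal 2 * DSO n x y ^ (2 : ℕ) := by
          calc DSO n x y = 1 * (DSO n x y * 1) := by simp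
            _ ≤ ENNReal.ofReal 2 * (DSO n x y * DSO n x y) := by
              gcongr; rw [ENNReal.one_le_ofReal]; norm_num
            _ = _ := by rw [sq]
        _ ≤ _ := le_add_self
    · have hd := hsDist_le_DSO x y
      rw [hsDist_eq] at hd
      have hu : hsSq (x - y) ≤ 1 := by
        simpa [Real.sqrt_le_one] using hd.trans h
      have h0 := Real.sqrt_nonneg (hsSq (x - y))
      refine (wassersteinE_kacKernel_le_of_close hn hx hy hu).trans ?_
      rw [ENNReal.ofReal_add (by positivity) (by positivity), ENNReal.ofReal_mul (by positivity),
        ENNReal.ofReal_mul (by positivity), ENNReal.ofReal_pow h0]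
      gcongr
  refine ⟨2, by norm_num, main, fun x hx C' hC' => ⟨(C' - Real.sqrt (1 - 1 / n.choose 2)) / 2,
    by linarith, fun y hy hlt => (main x hx y hy).trans ?_⟩⟩
  calc _ ≤ ENNReal.ofReal (Real.sqrt (1 - 1 / (n.choose 2 : ℝ))) * DSO n x y +
        ENNReal.ofReal 2 *
          (ENNReal.ofReal ((C' - Real.sqrt (1 - 1 / n.choose 2)) / 2) * DSO n x y) := by
        rw [sq]; gcongr
    _ = _ := by
        rw [← mul_assoc, ← add_mul, ← ENNReal.ofReal_mul zero_le_two,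
          ← ENNReal.ofReal_add (Real.sqrt_nonneg _) (by linarith)]
        congr 2
        ring

end
end

section
/- Let (M,d) be a Polish length space, p ≥ 1, C > 0, and let P be a Markov transition kernel on M such that (i) P_x has finite p-th moment for every x ∈ M, and (ii) the map x ↦ P_x from (M,d) to (Pr_{d,p}(M), W_{d,p}) is locally C-Lipschitz. Then for every probability measure μ on M with finite p-th moment, μP also has finite p-th moment, and for all such measures μ, ν one has W_{d,p}(μP, νP) ≤ C · W_{d,p}(μ, ν). -/
open MeasureTheory ENNReal Filter Topology Matrix

noncomputable section

/-- `μ` has a finite `p`-th moment with respect to the distance function `d`. -/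
def HasFiniteMoment {X : Type*} [MeasurableSpace X] (d : X → X → ℝ≥0∞) (p : ℝ)
    (μ : Measure X) : Prop :=
  ∃ o : X, ∫⁻ x, d o x ^ p ∂μ < ⊤

/-- `(M, dist)` is a length space: the distance between any two points is the infimum of
the lengths of continuous curves joining them. -/
def IsLengthSpace (M : Type*) [MetricSpace M] : Prop :=
  ∀ x y : M, edist x y =
    ⨅ (γ : ℝ → M) (_ : ContinuousOn γ (Set.Icc 0 1)) (_ : γ 0 = x) (_ : γ 1 = y),
      pathLengthE edist γ

/-- `f : M → N` is locally `C`-Lipschitz with respect to the distance function `dN` on `N`: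
for every `x ∈ M`, `limsup_{y → x} dN(f x, f y) / dist(x, y) ≤ C`. -/
def LocallyLipWith {M N : Type*} [MetricSpace M] (dN : N → N → ℝ≥0∞) (C : ℝ)
    (f : M → N) : Prop :=
  ∀ x : M, Filter.limsup (fun y => dN (f x) (f y) / edist x y) (𝓝[≠] x) ≤ ENNReal.ofReal C

theorem eVariationOn_le_pathLengthE {M : Type*} [MetricSpace M] (γ : ℝ → M) :
    eVariationOn γ (Set.Icc 0 1) ≤ pathLengthE edist γ := by
  refine iSup_le ?_
  rintro ⟨n, u, hu, hmem⟩
  let v : ℕ → ℝ := fun i => Nat.casesOn i 0 fun j => if j ≤ n then u j else 1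
  have hv : Monotone v := by
    refine monotone_nat_of_le_succ fun i => ?_
    rcases i with _ | j
    · simpa [v] using (hmem 0).1
    · simp only [v]
      split_ifs with h₁ h₂ h₂
      · exact hu (Nat.le_succ j)
      · exact (hmem j).2
      · omega
      · exact le_rfl
  have hsum : ∑ i ∈ Finset.range n, edist (γ (u (i + 1))) (γ (u i)) ≤
      ∑ i ∈ Finset.range (n + 2), edist (γ (v i)) (γ (v (i + 1))) := by
    rw [Finset.sum_range_succ, Finset.sum_range_succ']
    refine le_add_right (le_add_right (Finset.sum_le_sum fun i hi => ?_))
    have hi := Finset.mem_range.1 hi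
    simp only [v, if_pos hi.le, if_pos (Nat.succ_le_of_lt hi)]
    rw [edist_comm]
  refine hsum.trans ?_
  rw [← Fin.sum_univ_eq_sum_range (fun i => edist (γ (v i)) (γ (v (i + 1))))]
  refine le_iSup_of_le (n + 2) (le_iSup_of_le (fun i => v i) (le_iSup_of_le ?_
    (le_iSup_of_le ?_ (le_iSup_of_le ?_ ?_))))
  · exact fun i j hij => hv hij
  · rfl
  · simp [v]
  · simp

/-- A pointwise bound `D (γ t) (γ s) ≤ C d(γ t, γ s)` for `s` near `t` integrates along a curve. -/
theorem le_mul_eVariationOn_of_eventually_le {M : Type*} [MetricSpace M] (D : M → M → ℝ≥0∞)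
    (hself : ∀ x, D x x = 0) (hsymm : ∀ x y, D x y = D y x)
    (htri : ∀ x y z, D x z ≤ D x y + D y z) (C : ℝ≥0∞)
    (hloc : ∀ x, ∀ᶠ y in 𝓝 x, D x y ≤ C * edist x y)
    (γ : ℝ → M) (hγ : ContinuousOn γ (Set.Icc 0 1)) :
    D (γ 0) (γ 1) ≤ C * eVariationOn γ (Set.Icc 0 1) := by
  set V : ℝ → ℝ → ℝ≥0∞ := fun a b => eVariationOn γ (Set.univ ∩ Set.Icc a b) with hV
  have hadd : ∀ {a b c : ℝ}, a ≤ b → b ≤ c → V a b + V b c = V a c := fun hab hbc =>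
    eVariationOn.Icc_add_Icc γ hab hbc (Set.mem_univ _)
  have hdist : ∀ {a b : ℝ}, a ≤ b → edist (γ a) (γ b) ≤ V a b := fun hab =>
    eVariationOn.edist_le γ ⟨trivial, le_rfl, hab⟩ ⟨trivial, hab, le_rfl⟩
  have hnear : ∀ t ∈ Set.Icc (0 : ℝ) 1, ∃ δ > 0, ∀ s ∈ Set.Icc (0 : ℝ) 1, |s - t| < δ →
      D (γ t) (γ s) ≤ C * edist (γ t) (γ s) := by
    intro t ht
    have := (hγ t ht).eventually (hloc (γ t))
    rw [eventually_nhdsWithin_iff, Metric.eventually_nhds_iff] at this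
    obtain ⟨δ, hδ, h⟩ := this
    exact ⟨δ, hδ, fun s hs hst => h (by rwa [Real.dist_eq]) hs⟩
  have hstep : ∀ {s t : ℝ}, 0 ≤ s → s ≤ t → D (γ 0) (γ s) ≤ C * V 0 s →
      D (γ s) (γ t) ≤ C * edist (γ s) (γ t) → D (γ 0) (γ t) ≤ C * V 0 t := by
    intro s t h0 hst h₁ h₂
    calc D (γ 0) (γ t) ≤ D (γ 0) (γ s) + D (γ s) (γ t) := htri _ _ _
      _ ≤ C * V 0 s + C * V s t := add_le_add h₁ (h₂.trans (by gcongr; exact hdist hst))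
      _ = C * V 0 t := by rw [← mul_add, hadd h0 hst]
  let S : Set ℝ := {t | ∀ s ∈ Set.Icc 0 t, D (γ 0) (γ s) ≤ C * V 0 s}
  have hS : Set.Icc (0 : ℝ) 1 ⊆ S := by
    refine IsClosed.Icc_subset_of_forall_exists_gt ?_ ?_ ?_
    · refine isClosed_of_closure_subset fun t ht => ?_
      have ht01 : t ∈ Set.Icc (0 : ℝ) 1 :=
        closure_minimal Set.inter_subset_right isClosed_Icc ht
      refine ⟨fun s hs => ?_, ht01⟩
      obtain ⟨δ, hδ, h⟩ := hnear t ht01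
      obtain ⟨r, ⟨hrS, hr01⟩, hr⟩ := Metric.mem_closure_iff.1 ht δ hδ
      rw [Real.dist_eq, abs_sub_comm] at hr
      by_cases hsr : s ≤ r
      · exact hrS s ⟨hs.1, hsr⟩
      · rw [not_le] at hsr
        obtain rfl | hst := eq_or_lt_of_le hs.2
        · refine hstep hr01.1 hsr.le (hrS r ⟨hr01.1, le_rfl⟩) ?_
          rw [hsymm, edist_comm]
          exact h r hr01 hr
        · obtain ⟨q, ⟨hqS, hq01⟩, hq⟩ := Metric.mem_closure_iff.1 ht (t - s) (sub_pos.2 hst)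
          rw [Real.dist_eq] at hq
          have := (abs_lt.1 hq).2
          exact hqS s ⟨hs.1, by linarith⟩
    · rintro s ⟨h0, h1⟩
      obtain rfl := le_antisymm h1 h0
      simp [hself]
    · rintro x ⟨hxS, hx⟩ y hy
      obtain ⟨δ, hδ, h⟩ := hnear x ⟨hx.1, hx.2.le⟩
      refine ⟨min (min y 1) (x + δ / 2), fun s hs => ?_, ?_, ?_⟩
      · by_cases hsx : s ≤ x
        · exact hxS s ⟨hs.1, hsx⟩
        · rw [not_le] at hsx
          have h₁ := hs.2.trans (min_le_right _ _)
          have h₂ := hs.2.trans ((min_le_left _ _).trans (min_le_right _ _))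
          refine hstep hx.1 hsx.le (hxS x ⟨hx.1, le_rfl⟩) (h s ⟨hs.1, h₂⟩ ?_)
          rw [abs_lt]
          constructor <;> linarith
      · exact lt_min (lt_min hy hx.2) (by linarith)
      · exact (min_le_left _ _).trans (min_le_left _ _)
  have := hS (Set.right_mem_Icc.2 zero_le_one) 1 (Set.right_mem_Icc.2 zero_le_one)
  simpa [hV] using this

theorem IsLengthSpace.le_mul_edist {M : Type*} [MetricSpace M] (hlen : IsLengthSpace M)
    (D : M → M → ℝ≥0∞) (hself : ∀ x, D x x = 0) (hsymm : ∀ x y, D x y = D y x)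
    (htri : ∀ x y z, D x z ≤ D x y + D y z) (C : ℝ)
    (hlip : ∀ x, limsup (fun y => D x y / edist x y) (𝓝[≠] x) ≤ ENNReal.ofReal C) (x y : M) :
    D x y ≤ ENNReal.ofReal C * edist x y := by
  refine ENNReal.le_mul_of_forall_lt (.inr (edist_ne_top _ _)) (.inl ofReal_ne_top)
    fun C' hC' r hr => ?_
  have hloc : ∀ x, ∀ᶠ y in 𝓝 x, D x y ≤ C' * edist x y := by
    intro x
    have h := eventually_lt_of_limsup_lt ((hlip x).trans_lt hC')
    rw [eventually_nhdsWithin_iff] at h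
    filter_upwards [h] with y hy
    by_cases hxy : y = x
    · simp [hxy, hself]
    · exact (ENNReal.div_le_iff (by simpa using Ne.symm hxy) (edist_ne_top _ _)).1
        (hy hxy).le
  rw [gt_iff_lt, hlen x y] at hr
  simp only [iInf_lt_iff] at hr
  obtain ⟨γ, hγ, rfl, rfl, hlt⟩ := hr
  exact (le_mul_eVariationOn_of_eventually_le D hself hsymm htri C' hloc γ hγ).trans
    (by gcongr; exact (eVariationOn_le_pathLengthE γ).trans hlt.le)

namespace IsCoupling

variable {X : Type*} [MeasurableSpace X] {η : Measure (X × X)} {μ ν : Measure X}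

theorem isProbabilityMeasure (h : IsCoupling η μ ν) [IsProbabilityMeasure μ] :
    IsProbabilityMeasure η :=
  ⟨by
    have : η.map Prod.fst Set.univ = 1 := by rw [h.1]; exact measure_univ
    rwa [Measure.map_apply measurable_fst MeasurableSet.univ] at this⟩

theorem swap (h : IsCoupling η μ ν) : IsCoupling (η.map Prod.swap) ν μ := by
  constructor
  · rw [Measure.map_map measurable_fst measurable_swap]; exact h.2
  · rw [Measure.map_map measurable_snd measurable_swap]; exact h.1

theorem lintegral_fst (h : IsCoupling η μ ν) {f : X → ℝ≥0∞} (hf : Measurable f) :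
    ∫⁻ z, f z.1 ∂η = ∫⁻ x, f x ∂μ := by
  rw [← h.1, lintegral_map hf measurable_fst]

theorem lintegral_snd (h : IsCoupling η μ ν) {f : X → ℝ≥0∞} (hf : Measurable f) :
    ∫⁻ z, f z.2 ∂η = ∫⁻ x, f x ∂ν := by
  rw [← h.2, lintegral_map hf measurable_snd]

theorem bind (hη : IsCoupling η μ ν)
    {κ : X × X → Measure (X × X)} (hκ : Measurable κ) {P Q : X → Measure X} (hP : Measurable P)
    (hQ : Measurable Q) (h : ∀ z, IsCoupling (κ z) (P z.1) (Q z.2)) :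
    IsCoupling (η.bind κ) (μ.bind P) (ν.bind Q) := by
  have h₁ : ∀ f : X → ℝ≥0∞, Measurable f → Measurable fun z : X × X => f z.1 := fun f hf =>
    hf.comp measurable_fst
  have h₂ : ∀ f : X → ℝ≥0∞, Measurable f → Measurable fun z : X × X => f z.2 := fun f hf =>
    hf.comp measurable_snd
  constructor <;> refine Measure.ext_of_lintegral _ fun f hf => ?_
  · rw [lintegral_map hf measurable_fst,
      Measure.lintegral_bind hκ.aemeasurable (h₁ f hf).aemeasurable,
      Measure.lintegral_bind hP.aemeasurable hf.aemeasurable]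
    exact (lintegral_congr fun z => (h z).lintegral_fst hf).trans
      (hη.lintegral_fst ((Measure.measurable_lintegral hf).comp hP))
  · rw [lintegral_map hf measurable_snd,
      Measure.lintegral_bind hκ.aemeasurable (h₂ f hf).aemeasurable,
      Measure.lintegral_bind hQ.aemeasurable hf.aemeasurable]
    exact (lintegral_congr fun z => (h z).lintegral_snd hf).trans
      (hη.lintegral_snd ((Measure.measurable_lintegral hf).comp hQ))

open scoped ProbabilityTheory in
/-- Gluing of two couplings along their common marginal. -/
theorem exists_glue [StandardBorelSpace X] {ρ : Measure X} {θ : Measure (X × X)}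
    [IsProbabilityMeasure ν] (h : IsCoupling η μ ν) (h' : IsCoupling θ ν ρ) :
    ∃ ζ : Measure (X × X × X), ζ.map (fun z => (z.2.1, z.1)) = η ∧
      ζ.map (fun z => (z.1, z.2.2)) = θ := by
  have : Nonempty X := nonempty_of_isProbabilityMeasure ν
  have := h.swap.isProbabilityMeasure
  have := h'.isProbabilityMeasure
  set η' := η.map Prod.swap with hη'
  refine ⟨ν ⊗ₘ (η'.condKernel ×ₖ θ.condKernel), ?_, ?_⟩
  · have h1 : (ν ⊗ₘ (η'.condKernel ×ₖ θ.condKernel)).map (Prod.map id Prod.fst) = η' := by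
      rw [← Measure.compProd_map measurable_fst, ← ProbabilityTheory.Kernel.fst_eq,
        ProbabilityTheory.Kernel.fst_prod]
      conv_lhs => rw [← h.swap.1]
      exact η'.disintegrate η'.condKernel
    have h2 := congrArg (Measure.map Prod.swap) h1
    have h3 : η'.map Prod.swap = η := by
      rw [hη', Measure.map_map measurable_swap measurable_swap, Prod.swap_swap_eq, Measure.map_id]
    rw [Measure.map_map measurable_swap (by fun_prop), h3] at h2
    exact h2
  · have h1 : (ν ⊗ₘ (η'.condKernel ×ₖ θ.condKernel)).map (Prod.map id Prod.snd) = θ := by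
      rw [← Measure.compProd_map measurable_snd, ← ProbabilityTheory.Kernel.snd_eq,
        ProbabilityTheory.Kernel.snd_prod]
      conv_lhs => rw [← h'.1]
      exact θ.disintegrate θ.condKernel
    exact h1

end IsCoupling

theorem exists_isCoupling_of_wassersteinE_lt {X : Type*} [MeasurableSpace X]
    {d : X → X → ℝ≥0∞} {p : ℝ} (hp : 0 < p) {μ ν : Measure X} {r : ℝ≥0∞}
    (h : wassersteinE d p μ ν < r) :
    ∃ η, IsCoupling η μ ν ∧ ∫⁻ z, d z.1 z.2 ^ p ∂η < r ^ p := by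
  simp only [wassersteinE, iInf_lt_iff] at h
  obtain ⟨η, hη, hlt⟩ := h
  refine ⟨η, hη, ?_⟩
  rwa [one_div, ENNReal.rpow_inv_lt_iff hp] at hlt

theorem wassersteinE_le {X : Type*} [MeasurableSpace X] {d : X → X → ℝ≥0∞} {p : ℝ}
    {μ ν : Measure X} {η : Measure (X × X)} (h : IsCoupling η μ ν) :
    wassersteinE d p μ ν ≤ (∫⁻ z, d z.1 z.2 ^ p ∂η) ^ (1 / p) :=
  iInf₂_le η h

theorem exists_isCoupling_lintegral_le_add {X : Type*} [MeasurableSpace X]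
    {d : X → X → ℝ≥0∞} {p : ℝ} (hp : 0 < p) {μ ν : Measure X} {b ε : ℝ≥0∞}
    (h : wassersteinE d p μ ν ≤ b) (hb : b ≠ ⊤) (hε : ε ≠ 0) :
    ∃ η, IsCoupling η μ ν ∧ ∫⁻ z, d z.1 z.2 ^ p ∂η ≤ b ^ p + ε := by
  have hlt : wassersteinE d p μ ν < (b ^ p + ε) ^ (1 / p) := by
    refine h.trans_lt ?_
    rw [one_div, ENNReal.lt_rpow_inv_iff hp]
    exact ENNReal.lt_add_right (ENNReal.rpow_ne_top_of_nonneg hp.le hb) hε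
  obtain ⟨η, hη, hle⟩ := exists_isCoupling_of_wassersteinE_lt hp hlt
  refine ⟨η, hη, hle.le.trans_eq ?_⟩
  rw [← ENNReal.rpow_mul, one_div_mul_cancel hp.ne', ENNReal.rpow_one]

theorem edist_rpow_le_two_rpow_mul {M : Type*} [MetricSpace M] {p : ℝ} (hp : 1 ≤ p)
    (x y z : M) :
    edist x z ^ p ≤ 2 ^ (p - 1) * (edist x y ^ p + edist y z ^ p) :=
  (ENNReal.rpow_le_rpow (edist_triangle x y z) (by positivity)).trans
    (ENNReal.rpow_add_le_mul_rpow_add_rpow _ _ hp)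

theorem tendsto_of_eq_bind {M : Type*} [TopologicalSpace M] [MeasurableSpace M]
    [OpensMeasurableSpace M] (μ : Measure M) [IsProbabilityMeasure μ]
    {Q : ℕ → M → ProbabilityMeasure M} (hQ : ∀ n, Measurable fun x => (Q n x : Measure M))
    {P : M → ProbabilityMeasure M} (hP : Measurable fun x => (P x : Measure M))
    (h : ∀ x, Tendsto (fun n => Q n x) atTop (𝓝 (P x)))
    {ρs : ℕ → ProbabilityMeasure M} {ρ : ProbabilityMeasure M}
    (hρs : ∀ n, (ρs n : Measure M) = μ.bind fun x => (Q n x : Measure M))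
    (hρ : (ρ : Measure M) = μ.bind fun x => (P x : Measure M)) :
    Tendsto ρs atTop (𝓝 ρ) := by
  rw [ProbabilityMeasure.tendsto_iff_forall_lintegral_tendsto]
  intro f
  have hf : Measurable fun x => (f x : ℝ≥0∞) := f.continuous.measurable.coe_nnreal_ennreal
  simp_rw [hρs, hρ, Measure.lintegral_bind hP.aemeasurable hf.aemeasurable,
    fun n => Measure.lintegral_bind (hQ n).aemeasurable hf.aemeasurable (m := μ)]
  refine tendsto_lintegral_of_dominated_convergence (fun _ => (nndist f 0 : ℝ≥0∞))
    (fun n => (Measure.measurable_lintegral hf).comp (hQ n)) (fun n => ?_) (by simp) ?_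
  · refine Eventually.of_forall fun x => ?_
    calc ∫⁻ y, f y ∂(Q n x : Measure M) ≤ ∫⁻ _, (nndist f 0 : ℝ≥0∞) ∂(Q n x : Measure M) :=
          lintegral_mono fun y =>
            ENNReal.coe_le_coe.2 (BoundedContinuousFunction.NNReal.upper_bound f y)
      _ = nndist f 0 := by simp
  · exact Eventually.of_forall fun x =>
      ProbabilityMeasure.tendsto_iff_forall_lintegral_tendsto.1 (h x) f

section Metric

variable {M : Type*} [MetricSpace M] [TopologicalSpace.SeparableSpace M]
  [MeasurableSpace M] [BorelSpace M]

theorem measurable_edist_fst_snd : Measurable fun z : M × M => edist z.1 z.2 :=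
  haveI := UniformSpace.secondCountable_of_separable M
  measurable_edist

theorem measurable_edist_rpow (p : ℝ) : Measurable fun z : M × M => edist z.1 z.2 ^ p :=
  measurable_edist_fst_snd.pow_const p

theorem measurable_edist_left_rpow (o : M) (p : ℝ) : Measurable fun x : M => edist o x ^ p :=
  (measurable_edist_rpow p).comp measurable_prodMk_left

theorem wassersteinE_self {p : ℝ} (hp : 0 < p) (μ : Measure M) :
    wassersteinE edist p μ μ = 0 := by
  have hmeas : Measurable fun x : M => (x, x) := measurable_id.prodMk measurable_id
  have h : IsCoupling (μ.map fun x => (x, x)) μ μ := by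
    constructor
    · rw [Measure.map_map measurable_fst hmeas]; exact Measure.map_id
    · rw [Measure.map_map measurable_snd hmeas]; exact Measure.map_id
  refine le_antisymm ((wassersteinE_le h).trans ?_) zero_le
  rw [lintegral_map (measurable_edist_rpow p) hmeas]
  simp [hp]

theorem wassersteinE_comm (p : ℝ) (μ ν : Measure M) :
    wassersteinE edist p μ ν = wassersteinE edist p ν μ := by
  have key : ∀ μ ν : Measure M, wassersteinE edist p μ ν ≤ wassersteinE edist p ν μ := by
    refine fun μ ν => le_iInf₂ fun η hη => (wassersteinE_le hη.swap).trans_eq ?_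
    rw [lintegral_map (measurable_edist_rpow p) measurable_swap]
    simp [edist_comm]
  exact le_antisymm (key _ _) (key _ _)

theorem wassersteinE_triangle [CompleteSpace M] {p : ℝ} (hp : 1 ≤ p) (μ ν ρ : Measure M)
    [IsProbabilityMeasure ν] :
    wassersteinE edist p μ ρ ≤ wassersteinE edist p μ ν + wassersteinE edist p ν ρ := by
  have := UniformSpace.secondCountable_of_separable M
  simp only [wassersteinE, ENNReal.iInf_add, ENNReal.add_iInf]
  refine le_iInf₂ fun θ hθ => le_iInf₂ fun η hη => ?_
  obtain ⟨ζ, rfl, rfl⟩ := hη.exists_glue hθ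
  have hc : IsCoupling (ζ.map Prod.snd) μ ρ := by
    constructor
    · rw [← hη.1, Measure.map_map (by fun_prop) (by fun_prop),
        Measure.map_map (by fun_prop) (by fun_prop)]; rfl
    · rw [← hθ.2, Measure.map_map (by fun_prop) (by fun_prop),
        Measure.map_map (by fun_prop) (by fun_prop)]; rfl
  refine (wassersteinE_le (d := edist) (p := p) hc).trans ?_
  rw [lintegral_map (measurable_edist_rpow p) (by fun_prop),
    lintegral_map (measurable_edist_rpow p) (by fun_prop),
    lintegral_map (measurable_edist_rpow p) (by fun_prop)]
  refine le_trans ?_ (ENNReal.lintegral_Lp_add_le (by fun_prop) (by fun_prop) hp)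
  refine ENNReal.rpow_le_rpow (lintegral_mono fun z => ?_) (by positivity)
  exact ENNReal.rpow_le_rpow (edist_triangle _ _ _) (by positivity)

theorem edist_integral_le_mul_wassersteinE {p : ℝ} (hp : 1 ≤ p) (μ ν : Measure M)
    [IsProbabilityMeasure μ] [IsProbabilityMeasure ν] {f : M → ℝ} {L : NNReal}
    (hf : LipschitzWith L f) (hb : ∃ c, ∀ x y, dist (f x) (f y) ≤ c) :
    edist (∫ x, f x ∂μ) (∫ x, f x ∂ν) ≤ L * wassersteinE edist p μ ν := by
  have hint : ∀ ρ : Measure M, IsProbabilityMeasure ρ → Integrable f ρ := by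
    intro ρ hρ
    obtain ⟨o⟩ := nonempty_of_isProbabilityMeasure ρ
    obtain ⟨c, hc⟩ := hb
    refine Integrable.of_bound hf.continuous.measurable.aestronglyMeasurable (c + ‖f o‖)
      (Eventually.of_forall fun x => ?_)
    have h₁ := hc x o
    rw [dist_eq_norm] at h₁
    linarith [norm_sub_norm_le (f x) (f o)]
  have key : ∀ η, IsCoupling η μ ν → edist (∫ x, f x ∂μ) (∫ x, f x ∂ν) ≤
      L * (∫⁻ z, edist z.1 z.2 ^ p ∂η) ^ (1 / p) := by
    intro η hη
    have := hη.isProbabilityMeasure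
    have hiμ := hint μ inferInstance
    have hiν := hint ν inferInstance
    have hm := hf.continuous.measurable
    rw [← hη.1] at hiμ ⊢
    rw [← hη.2] at hiν ⊢
    have hi₁ : Integrable (fun z : M × M => f z.1) η := hiμ.comp_measurable measurable_fst
    have hi₂ : Integrable (fun z : M × M => f z.2) η := hiν.comp_measurable measurable_snd
    rw [integral_map measurable_fst.aemeasurable hm.aestronglyMeasurable,
      integral_map measurable_snd.aemeasurable hm.aestronglyMeasurable, edist_eq_enorm_sub,
      ← integral_sub hi₁ hi₂]
    calc ‖∫ z, f z.1 - f z.2 ∂η‖ₑ ≤ ∫⁻ z, ‖f z.1 - f z.2‖ₑ ∂η := enorm_integral_le_lintegral_enorm _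
      _ ≤ ∫⁻ z, L * edist z.1 z.2 ∂η := lintegral_mono fun z => by
        rw [← edist_eq_enorm_sub]; exact hf z.1 z.2
      _ = L * ∫⁻ z, edist z.1 z.2 ∂η := lintegral_const_mul _ measurable_edist_fst_snd
      _ ≤ L * (∫⁻ z, edist z.1 z.2 ^ p ∂η) ^ (1 / p) := by
        gcongr
        simpa [eLpNorm'] using eLpNorm'_le_eLpNorm'_of_exponent_le zero_lt_one hp η
          (f := fun z : M × M => edist z.1 z.2) measurable_edist_fst_snd.aestronglyMeasurable
  by_cases hL : L = 0
  · obtain ⟨η, hη⟩ : ∃ η, IsCoupling η μ ν := ⟨μ.prod ν, by simp [IsCoupling]⟩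
    simpa [hL] using key η hη
  · simp only [wassersteinE, ENNReal.mul_iInf_of_ne (ENNReal.coe_ne_zero.2 hL) ENNReal.coe_ne_top]
    exact le_iInf₂ key

theorem tendsto_of_tendsto_wassersteinE {p : ℝ} (hp : 1 ≤ p) {μs : ℕ → ProbabilityMeasure M}
    {μ : ProbabilityMeasure M}
    (h : Tendsto (fun n => wassersteinE edist p (μs n : Measure M) μ) atTop (𝓝 0)) :
    Tendsto μs atTop (𝓝 μ) := by
  rw [tendsto_iff_forall_lipschitz_integral_tendsto]
  rintro f hb ⟨L, hf⟩
  rw [tendsto_iff_edist_tendsto_0]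
  refine tendsto_of_tendsto_of_tendsto_of_le_of_le tendsto_const_nhds ?_ (fun n => zero_le)
    (fun n => edist_integral_le_mul_wassersteinE hp _ _ hf hb)
  simpa using ENNReal.Tendsto.const_mul h (.inr ENNReal.coe_ne_top)

/-- The infimal transport cost is lower semicontinuous under weak convergence. -/
theorem exists_isCoupling_lintegral_le_of_tendsto [CompleteSpace M] {p : ℝ} (hp : 0 ≤ p)
    {μ ν : ProbabilityMeasure M} {μs νs : ℕ → ProbabilityMeasure M}
    (hμ : Tendsto μs atTop (𝓝 μ)) (hν : Tendsto νs atTop (𝓝 ν)) {η : ℕ → Measure (M × M)}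
    (hη : ∀ n, IsCoupling (η n) (μs n) (νs n)) {c : ℕ → ℝ≥0∞} {a : ℝ≥0∞}
    (hc : Tendsto c atTop (𝓝 a)) (hle : ∀ n, ∫⁻ z, edist z.1 z.2 ^ p ∂η n ≤ c n) :
    ∃ θ : Measure (M × M), IsCoupling θ μ ν ∧ ∫⁻ z, edist z.1 z.2 ^ p ∂θ ≤ a := by
  have := UniformSpace.secondCountable_of_separable M
  have htight : ∀ {ρ : ProbabilityMeasure M} {ρs : ℕ → ProbabilityMeasure M},
      Tendsto ρs atTop (𝓝 ρ) →
        IsTightMeasureSet {(ρ' : Measure M) | ρ' ∈ Set.range ρs} := fun h =>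
    isTightMeasureSet_of_isCompact_closure
      (h.isCompact_insert_range.closure_of_subset (Set.subset_insert _ _))
  let θs : ℕ → ProbabilityMeasure (M × M) := fun n => ⟨η n, (hη n).isProbabilityMeasure⟩
  have hcomp : IsCompact (closure (Set.range θs)) := by
    refine isCompact_closure_of_isTightMeasureSet (IsTightMeasureSet.prodMk ?_ ?_)
    · refine (htight hμ).subset ?_
      rintro _ ⟨_, ⟨_, ⟨n, rfl⟩, rfl⟩, rfl⟩
      exact ⟨μs n, ⟨n, rfl⟩, (hη n).1.symm⟩
    · refine (htight hν).subset ?_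
      rintro _ ⟨_, ⟨_, ⟨n, rfl⟩, rfl⟩, rfl⟩
      exact ⟨νs n, ⟨n, rfl⟩, (hη n).2.symm⟩
  obtain ⟨θ, -, φ, hφ, hθ⟩ := hcomp.isSeqCompact fun n => subset_closure (Set.mem_range_self n)
  refine ⟨θ, ⟨?_, ?_⟩, ?_⟩
  · have h₁ := ProbabilityMeasure.tendsto_map_of_tendsto_of_continuous _ _ hθ continuous_fst
    have h₂ := hμ.comp hφ.tendsto_atTop
    have h₃ := tendsto_nhds_unique (h₁.congr (f₂ := μs ∘ φ) fun n => Subtype.ext (hη (φ n)).1) h₂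
    exact congrArg ProbabilityMeasure.toMeasure h₃
  · have h₁ := ProbabilityMeasure.tendsto_map_of_tendsto_of_continuous _ _ hθ continuous_snd
    have h₂ := hν.comp hφ.tendsto_atTop
    have h₃ := tendsto_nhds_unique (h₁.congr (f₂ := νs ∘ φ) fun n => Subtype.ext (hη (φ n)).2) h₂
    exact congrArg ProbabilityMeasure.toMeasure h₃
  · have hd : ∀ z : M × M, edist z.1 z.2 ^ p = ENNReal.ofReal (dist z.1 z.2 ^ p) := fun z => by
      rw [edist_dist, ENNReal.ofReal_rpow_of_nonneg dist_nonneg hp]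
    have hlsc := lintegral_le_liminf_lintegral_of_forall_isOpen_measure_le_liminf_measure
      (μ := (θ : Measure (M × M))) (μs := fun n => η (φ n)) (f := fun z => dist z.1 z.2 ^ p)
      (continuous_dist.rpow_const fun _ => .inr hp) (fun z => by positivity)
      (fun G hG => ProbabilityMeasure.le_liminf_measure_open_of_tendsto hθ hG)
    simp only [hd] at hle ⊢
    refine hlsc.trans ((liminf_le_liminf (Eventually.of_forall fun n => hle (φ n))).trans ?_)
    exact (hc.comp hφ.tendsto_atTop).liminf_eq.le

theorem HasFiniteMoment.lintegral_lt_top {p : ℝ} (hp : 1 ≤ p) {μ : Measure M}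
    [IsProbabilityMeasure μ] (h : HasFiniteMoment edist p μ) (o : M) :
    ∫⁻ x, edist o x ^ p ∂μ < ⊤ := by
  obtain ⟨o', ho'⟩ := h
  have hp0 : 0 ≤ p := by positivity
  calc ∫⁻ x, edist o x ^ p ∂μ
      ≤ ∫⁻ x, 2 ^ (p - 1) * (edist o o' ^ p + edist o' x ^ p) ∂μ :=
        lintegral_mono fun x => edist_rpow_le_two_rpow_mul hp o o' x
    _ = 2 ^ (p - 1) * (edist o o' ^ p + ∫⁻ x, edist o' x ^ p ∂μ) := by
        have hm := measurable_edist_left_rpow o' p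
        rw [lintegral_const_mul _ (by fun_prop), lintegral_add_left measurable_const]
        simp
    _ < ⊤ := by
        have := edist_ne_top o o'
        finiteness

theorem hasFiniteMoment_bind {p : ℝ} (hp : 1 ≤ p) {C : ℝ≥0∞} (hC : C ≠ ⊤) {P : M → Measure M}
    (hP : Measurable P) (hPp : ∀ x, IsProbabilityMeasure (P x))
    (hmom : ∀ x, HasFiniteMoment edist p (P x))
    (hlip : ∀ x y, wassersteinE edist p (P x) (P y) ≤ C * edist x y) (μ : Measure M)
    [IsProbabilityMeasure μ] (hμ : HasFiniteMoment edist p μ) :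
    HasFiniteMoment edist p (μ.bind P) := by
  obtain ⟨o, ho⟩ := hμ
  refine ⟨o, ?_⟩
  have hp0 : 0 < p := by positivity
  have hPo := (hmom o).lintegral_lt_top hp o
  rw [Measure.lintegral_bind hP.aemeasurable (measurable_edist_left_rpow o p).aemeasurable]
  have hbound : ∀ x, ∫⁻ y, edist o y ^ p ∂P x ≤
      2 ^ (p - 1) * (∫⁻ y, edist o y ^ p ∂P o + (C ^ p * edist o x ^ p + 1)) := by
    intro x
    obtain ⟨η, hη, hle⟩ := exists_isCoupling_lintegral_le_add hp0 (hlip o x)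
      (ENNReal.mul_ne_top hC (edist_ne_top _ _)) one_ne_zero
    rw [ENNReal.mul_rpow_of_nonneg _ _ hp0.le] at hle
    rw [← hη.lintegral_snd (measurable_edist_left_rpow o p),
      ← hη.lintegral_fst (measurable_edist_left_rpow o p)]
    have hd : Measurable fun z : M × M => edist z.1 z.2 ^ p := measurable_edist_rpow p
    have hm : Measurable fun z : M × M => edist o z.1 ^ p :=
      (measurable_edist_left_rpow o p).comp measurable_fst
    calc ∫⁻ z, edist o z.2 ^ p ∂η
        ≤ ∫⁻ z, 2 ^ (p - 1) * (edist o z.1 ^ p + edist z.1 z.2 ^ p) ∂η :=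
          lintegral_mono fun z => edist_rpow_le_two_rpow_mul hp o z.1 z.2
      _ = 2 ^ (p - 1) * (∫⁻ z, edist o z.1 ^ p ∂η + ∫⁻ z, edist z.1 z.2 ^ p ∂η) := by
          rw [lintegral_const_mul _ (by fun_prop), lintegral_add_left hm]
      _ ≤ _ := by gcongr
  refine (lintegral_mono hbound).trans_lt ?_
  have hm := measurable_edist_left_rpow o p
  rw [lintegral_const_mul _ (by fun_prop), lintegral_add_left (by fun_prop),
    lintegral_add_left (by fun_prop), lintegral_const_mul _ (by fun_prop)]
  simp only [lintegral_const, measure_univ, mul_one]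
  have hp0 := hp0.le
  finiteness

theorem tendsto_lintegral_edist_approxOn {p : ℝ} (hp : 1 ≤ p) {C : ℝ≥0∞} (hC : C ≠ ⊤)
    {η : Measure (M × M)} {μ ν : Measure M} (hη : IsCoupling η μ ν) {T : ℕ → SimpleFunc M M}
    (hT : ∀ x, Tendsto (fun n => T n x) atTop (𝓝 x)) {o : M}
    (hTo : ∀ n x, edist o (T n x) ≤ edist o x + edist o x)
    (hμ : ∫⁻ x, edist o x ^ p ∂μ < ⊤) (hν : ∫⁻ x, edist o x ^ p ∂ν < ⊤) :
    Tendsto (fun n => ∫⁻ z, (C * edist (T n z.1) (T n z.2)) ^ p ∂η) atTop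
      (𝓝 (∫⁻ z, (C * edist z.1 z.2) ^ p ∂η)) := by
  have hp0 : 0 ≤ p := by positivity
  have hm : Measurable fun x => edist o x ^ p := measurable_edist_left_rpow o p
  have h₁ : Measurable fun z : M × M => edist o z.1 ^ p := hm.comp measurable_fst
  have h₂ : Measurable fun z : M × M => edist o z.2 ^ p := hm.comp measurable_snd
  refine tendsto_lintegral_of_dominated_convergence
    (fun z => (C * 2) ^ p * (2 ^ (p - 1) * (edist o z.1 ^ p + edist o z.2 ^ p)))
    (fun n => ?_) (fun n => Eventually.of_forall fun z => ?_) ?_ (Eventually.of_forall fun z => ?_)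
  · exact (measurable_const.mul (measurable_edist_fst_snd.comp
      (((T n).measurable.comp measurable_fst).prodMk
        ((T n).measurable.comp measurable_snd)))).pow_const p
  · calc (C * edist (T n z.1) (T n z.2)) ^ p
        ≤ (C * 2 * (edist o z.1 + edist o z.2)) ^ p := by
          rw [mul_assoc]
          gcongr
          refine (edist_triangle_left _ _ o).trans
            ((add_le_add (hTo n z.1) (hTo n z.2)).trans_eq ?_)
          ring
      _ ≤ _ := by
          rw [ENNReal.mul_rpow_of_nonneg _ _ hp0]
          refine mul_le_mul_right ?_ _
          exact ENNReal.rpow_add_le_mul_rpow_add_rpow _ _ hp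
  · rw [lintegral_const_mul _ (by fun_prop), lintegral_const_mul _ (by fun_prop),
      lintegral_add_left h₁, hη.lintegral_fst hm, hη.lintegral_snd hm]
    finiteness
  · refine Tendsto.ennrpow_const p (ENNReal.Tendsto.const_mul ?_ (.inr hC))
    exact (hT z.1).edist (hT z.2)

theorem wassersteinE_bind_le [CompleteSpace M] {p : ℝ} (hp : 1 ≤ p) {C : ℝ≥0∞} (hC0 : C ≠ 0)
    (hC : C ≠ ⊤) {P : M → Measure M} (hP : Measurable P) (hPp : ∀ x, IsProbabilityMeasure (P x))
    (hlip : ∀ x y, wassersteinE edist p (P x) (P y) ≤ C * edist x y) (μ ν : Measure M)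
    [IsProbabilityMeasure μ] [IsProbabilityMeasure ν] (hμ : HasFiniteMoment edist p μ)
    (hν : HasFiniteMoment edist p ν) :
    wassersteinE edist p (μ.bind P) (ν.bind P) ≤ C * wassersteinE edist p μ ν := by
  have hp0 : 0 < p := by positivity
  obtain ⟨o⟩ := nonempty_of_isProbabilityMeasure μ
  let T : ℕ → SimpleFunc M M := SimpleFunc.approxOn id measurable_id Set.univ o (Set.mem_univ o)
  have hT : ∀ x, Tendsto (fun n => T n x) atTop (𝓝 x) := fun x =>
    SimpleFunc.tendsto_approxOn measurable_id (Set.mem_univ o) (by simp)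
  have hTo : ∀ n x, edist o (T n x) ≤ edist o x + edist o x := fun n x =>
    SimpleFunc.edist_approxOn_y0_le measurable_id (Set.mem_univ o) x n
  let Q : M → ProbabilityMeasure M := fun x => ⟨P x, hPp x⟩
  have hPT : ∀ n, Measurable fun x => P (T n x) := fun n => hP.comp (T n).measurable
  have hprob : ∀ (ρ : Measure M) [IsProbabilityMeasure ρ] (R : M → Measure M), Measurable R →
      (∀ x, IsProbabilityMeasure (R x)) → IsProbabilityMeasure (ρ.bind R) := fun ρ _ R hR h =>
    isProbabilityMeasure_bind hR.aemeasurable (Eventually.of_forall h)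
  have hQT : ∀ x, Tendsto (fun n => Q (T n x)) atTop (𝓝 (Q x)) := by
    intro x
    refine tendsto_of_tendsto_wassersteinE hp ?_
    refine tendsto_of_tendsto_of_tendsto_of_le_of_le tendsto_const_nhds ?_ (fun n => zero_le)
      (fun n => hlip (T n x) x)
    simpa using ENNReal.Tendsto.const_mul (tendsto_iff_edist_tendsto_0.1 (hT x)) (.inr hC)
  have hlim : ∀ (ρ : Measure M) [hρ : IsProbabilityMeasure ρ],
      Tendsto (β := ProbabilityMeasure M)
        (fun n => ⟨ρ.bind fun x => P (T n x), hprob ρ _ (hPT n) fun _ => hPp _⟩) atTop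
        (𝓝 ⟨ρ.bind P, hprob ρ P hP hPp⟩) := fun ρ _ =>
    tendsto_of_eq_bind ρ (Q := fun n x => Q (T n x)) (P := Q) hPT hP hQT (fun _ => rfl) rfl
  have key : ∀ η, IsCoupling η μ ν → wassersteinE edist p (μ.bind P) (ν.bind P) ≤
      C * (∫⁻ z, edist z.1 z.2 ^ p ∂η) ^ (1 / p) := by
    intro η hη
    have := hη.isProbabilityMeasure
    choose K hK hKle using fun (n : ℕ) (z : M × M) =>
      exists_isCoupling_lintegral_le_add hp0 (hlip z.1 z.2)
        (ENNReal.mul_ne_top hC (edist_ne_top _ _))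
        (ENNReal.inv_ne_zero.2 (ENNReal.natCast_ne_top n))
    let S : ℕ → SimpleFunc (M × M) (M × M) := fun n =>
      ((T n).comp Prod.fst measurable_fst).pair ((T n).comp Prod.snd measurable_snd)
    have hS : ∀ n, Measurable fun z => K n (S n z) := fun n => ((S n).map (K n)).measurable
    have hcost := (tendsto_lintegral_edist_approxOn hp hC hη hT hTo
      (hμ.lintegral_lt_top hp o) (hν.lintegral_lt_top hp o)).add ENNReal.tendsto_inv_nat_nhds_zero
    obtain ⟨θ, hθ, hθle⟩ := exists_isCoupling_lintegral_le_of_tendsto hp0.le (hlim μ) (hlim ν)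
      (fun n => hη.bind (hS n) (hPT n) (hPT n) fun z => hK n (S n z)) hcost
      (fun n => by
        rw [Measure.lintegral_bind (hS n).aemeasurable (measurable_edist_rpow p).aemeasurable]
        refine (lintegral_mono fun z => hKle n (S n z)).trans_eq ?_
        rw [lintegral_add_right _ measurable_const]
        simp [S])
    refine (wassersteinE_le hθ).trans ((ENNReal.rpow_le_rpow hθle (by positivity)).trans_eq ?_)
    simp_rw [ENNReal.mul_rpow_of_nonneg _ _ hp0.le]
    rw [add_zero, lintegral_const_mul _ (measurable_edist_rpow p),
      ENNReal.mul_rpow_of_nonneg _ _ (by positivity), ← ENNReal.rpow_mul,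
      mul_one_div_cancel hp0.ne', ENNReal.rpow_one]
  simp only [wassersteinE, ENNReal.mul_iInf_of_ne hC0 hC] at key ⊢
  exact le_iInf₂ key

end Metric

/-- **Theorem 3 (Local-to-global coupling).** Let `(M,d)` be a Polish length space,
`p ≥ 1`, `C > 0`, and `P` a Markov transition kernel on `M` such that every `P_x` has a
finite `p`-th moment and `x ↦ P_x` is locally `C`-Lipschitz into `(Pr_{d,p}(M), W_{d,p})`.
Then `μ ↦ μP` preserves finiteness of `p`-th moments and is `C`-Lipschitz for `W_{d,p}`. -/
theorem local_to_global_coupling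
    {M : Type*} [MetricSpace M] [CompleteSpace M] [TopologicalSpace.SeparableSpace M]
    [MeasurableSpace M] [BorelSpace M]
    (hlen : IsLengthSpace M) (p : ℝ) (hp : 1 ≤ p) (C : ℝ) (hC : 0 < C)
    (P : M → Measure M) (hPmeas : Measurable P)
    (hPprob : ∀ x, IsProbabilityMeasure (P x))
    (hPmom : ∀ x, HasFiniteMoment edist p (P x))
    (hPlip : LocallyLipWith (wassersteinE edist p) C P) :
    (∀ μ : Measure M, IsProbabilityMeasure μ → HasFiniteMoment edist p μ →
        HasFiniteMoment edist p (μ.bind P)) ∧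
      ∀ μ ν : Measure M, IsProbabilityMeasure μ → IsProbabilityMeasure ν →
        HasFiniteMoment edist p μ → HasFiniteMoment edist p ν →
          wassersteinE edist p (μ.bind P) (ν.bind P) ≤
            ENNReal.ofReal C * wassersteinE edist p μ ν := by
  have hlip : ∀ x y, wassersteinE edist p (P x) (P y) ≤ ENNReal.ofReal C * edist x y :=
    hlen.le_mul_edist (fun x y => wassersteinE edist p (P x) (P y))
      (fun x => wassersteinE_self (by positivity) _) (fun x y => wassersteinE_comm p _ _)
      (fun x y z => wassersteinE_triangle hp _ _ _) C hPlip
  exact ⟨fun μ _ hμ => hasFiniteMoment_bind hp ofReal_ne_top hPmeas hPprob hPmom hlip μ hμ,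
    fun μ ν _ _ hμ hν => wassersteinE_bind_le hp (ENNReal.ofReal_pos.2 hC).ne' ofReal_ne_top
      hPmeas hPprob hlip μ ν hμ hν⟩

end
end
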